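/- Variational principle for induced pressure: Let (X,f) be a TDS and φ, ψ ∈ C(X,ℝ) with ψ > 0. Then P_ψ(φ) = sup{ (h_ν(f) + ∫φ dν) / ∫ψ dν : ν ∈ M(X,f) }. -/

import Mathlib

open MeasureTheory Filter Topology Set

variable {X : Type*}

/-- Birkhoff sum `S_n φ (x) = ∑_{i<n} φ(f^i x)`. -/
noncomputable def birkhoff (f : X → X) (φ : X → ℝ) (n : ℕ) (x : X) : ℝ :=
  ∑ i ∈ Finset.range n, φ (f^[i] x)

/-- The `n`-th Bowen metric. -/
noncomputable def dynDist [MetricSpace X] (f : X → X) (n : ℕ) (x y : X) : ℝ :=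
  ⨆ i : Fin n, dist (f^[(i : ℕ)] x) (f^[(i : ℕ)] y)

/-- `F` is an `(n,ε)`-spanning set of `Z`. -/
def IsSpanningSet [MetricSpace X] (f : X → X) (n : ℕ) (ε : ℝ) (Z : Set X) (F : Finset X) : Prop :=
  ∀ y ∈ Z, ∃ x ∈ F, dynDist f n x y ≤ ε

/-- `E` is `(n,ε)`-separated. -/
def IsSeparatedSet [MetricSpace X] (f : X → X) (n : ℕ) (ε : ℝ) (E : Finset X) : Prop :=
  ∀ x ∈ E, ∀ y ∈ E, x ≠ y → ε < dynDist f n x y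

/-- `S_T = {n : ∃ x, S_n ψ(x) ≤ T < S_{n+1} ψ(x)}`. -/
def STset (f : X → X) (ψ : X → ℝ) (T : ℝ) : Set ℕ :=
  {n | ∃ x : X, birkhoff f ψ n x ≤ T ∧ T < birkhoff f ψ (n + 1) x}

/-- `X_n = {x : S_n ψ(x) ≤ T < S_{n+1} ψ(x)}`. -/
def Xset (f : X → X) (ψ : X → ℝ) (T : ℝ) (n : ℕ) : Set X :=
  {x | birkhoff f ψ n x ≤ T ∧ T < birkhoff f ψ (n + 1) x}

/-- `Q_{ψ,T}(f,φ,ε)`, the spanning-set quantity. -/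
noncomputable def Qspan [MetricSpace X] (f : X → X) (φ ψ : X → ℝ) (T ε : ℝ) : ℝ :=
  sInf { r : ℝ | ∃ F : ℕ → Finset X,
    (∀ n ∈ STset f ψ T, IsSpanningSet f n ε (Xset f ψ T n) (F n)) ∧
    r = ∑' n : ℕ, Set.indicator (STset f ψ T)
        (fun n => ∑ x ∈ F n, Real.exp (birkhoff f φ n x)) n }

/-- `P_{ψ,T}(f,φ,ε)`, the separated-set quantity. -/
noncomputable def Psep [MetricSpace X] (f : X → X) (φ ψ : X → ℝ) (T ε : ℝ) : ℝ :=
  sSup { r : ℝ | ∃ E : ℕ → Finset X,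
    (∀ n ∈ STset f ψ T, (E n : Set X) ⊆ Xset f ψ T n ∧ IsSeparatedSet f n ε (E n)) ∧
    r = ∑' n : ℕ, Set.indicator (STset f ψ T)
        (fun n => ∑ x ∈ E n, Real.exp (birkhoff f φ n x)) n }

/-- The `ψ`-induced topological pressure of `φ`. -/
noncomputable def inducedPressure [MetricSpace X] (f : X → X) (φ ψ : X → ℝ) : EReal :=
  ⨆ (ε : ℝ) (_ : 0 < ε),
    Filter.limsup (fun T : ℝ => ((T⁻¹ * Real.log (Qspan f φ ψ T ε) : ℝ) : EReal)) atTop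

/-- Largest sum over `(n,ε)`-separated sets of `X`. -/
noncomputable def sepSum [MetricSpace X] (f : X → X) (φ : X → ℝ) (n : ℕ) (ε : ℝ) : ℝ :=
  sSup { r : ℝ | ∃ E : Finset X, IsSeparatedSet f n ε E ∧
    r = ∑ x ∈ E, Real.exp (birkhoff f φ n x) }

/-- The classical (Walters) topological pressure. -/
noncomputable def topPressure [MetricSpace X] (f : X → X) (φ : X → ℝ) : EReal :=
  ⨆ (ε : ℝ) (_ : 0 < ε),
    Filter.limsup (fun n : ℕ => (((n : ℝ)⁻¹ * Real.log (sepSum f φ n ε) : ℝ) : EReal)) atTop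
/-- The cell of the dynamical refinement `⋁_{i<n} f^{-i} P` indexed by itinerary `w`. -/
noncomputable def cellOf (f : X → X) {k n : ℕ} (P : Fin k → Set X) (w : Fin n → Fin k) : Set X :=
  ⋂ i : Fin n, f^[(i : ℕ)] ⁻¹' P (w i)

/-- `P` is a finite measurable partition of `X`. -/
def IsMeasPartition [MeasurableSpace X] {k : ℕ} (P : Fin k → Set X) : Prop :=
  (∀ i, MeasurableSet (P i)) ∧ Pairwise (Function.onFun Disjoint P) ∧ (⋃ i, P i) = Set.univ

/-- Entropy `H(⋁_{i<n} f^{-i} P)` of the `n`-th dynamical refinement. -/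
noncomputable def partitionEntropy [MeasurableSpace X] (μ : Measure X) (f : X → X)
    {k : ℕ} (P : Fin k → Set X) (n : ℕ) : ℝ :=
  ∑ w : Fin n → Fin k, Real.negMulLog (μ (cellOf f P w)).toReal

/-- Kolmogorov–Sinai (measure-theoretic) entropy `h_μ(f)`. -/
noncomputable def ksEntropy [MeasurableSpace X] (μ : Measure X) (f : X → X) : EReal :=
  ⨆ (k : ℕ) (P : Fin k → Set X) (_ : IsMeasPartition P),
    ⨅ n : ℕ, ((((n : ℝ) + 1)⁻¹ * partitionEntropy μ f P (n + 1) : ℝ) : EReal)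

/-- `μ` is an equilibrium measure for `ψ` and `φ`:
`(h_μ(f) + ∫ φ dμ) / ∫ ψ dμ = P_ψ(φ)` (written multiplicatively in `EReal`). -/
noncomputable def IsEquilibriumMeasure [MetricSpace X] [MeasurableSpace X]
    (f : X → X) (φ ψ : X → ℝ) (μ : Measure X) : Prop :=
  (ksEntropy μ f + ((∫ x, φ x ∂μ : ℝ) : EReal)) * (((∫ x, ψ x ∂μ)⁻¹ : ℝ) : EReal)
    = inducedPressure f φ ψ

/-!
For real `c`, the induced pressure obeys Bowen's equation: `c < P_ψ(φ)` iff `0 < P(φ - c ψ)`, where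
`P` is the classical pressure. Indeed `S_n ψ` differs from `T` by at most `max ψ` on the slice `X_n`
of time `T`, so there `exp (S_n φ)` and `exp (c T) * exp (S_n (φ - c ψ))` agree up to a constant,
and the slices involved for a given `T` (or `T`'s for a given `n`) are only linearly many.
The classical variational principle turns `0 < P(φ - c ψ)` into the existence of an invariant `μ`
with `0 < h_μ(f) + ∫ φ dμ - c ∫ ψ dμ`, that is, `c < (h_μ(f) + ∫ φ dμ) / ∫ ψ dμ`.

The classical principle itself is Misiurewicz's argument. For `h_μ(f) + ∫ g dμ ≤ P(g)`, each cell of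
a partition is approximated from inside by a compact set, so that a point of a spanning set is close
to few itineraries, and Gibbs' inequality applies; the loss of a bounded entropy per step is removed
by passing to iterates of `f`. Conversely, the Gibbs measures on separated sets, averaged along
orbits, accumulate at an invariant measure; its entropy is bounded below through partitions of small
diameter with null boundary.
-/

section Entropy

variable {ι κ τ : Type*}

lemma negMulLog_add_mul_log_le {p b : ℝ} (hp : 0 ≤ p) (hb : 0 ≤ b) (hpb : b = 0 → p = 0) :
    Real.negMulLog p + p * Real.log b ≤ b - p := by
  rcases hp.eq_or_lt with rfl | hp
  · simpa using hb
  have hb : 0 < b := hb.lt_of_ne fun h => hp.ne' (hpb h.symm)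
  have h := mul_le_mul_of_nonneg_left (Real.log_le_sub_one_of_pos (div_pos hb hp)) hp.le
  rw [Real.log_div hb.ne' hp.ne', mul_sub_one, mul_div_cancel₀ b hp.ne'] at h
  rw [Real.negMulLog]
  linarith

lemma negMulLog_add_mul_log_sub_le {p u v r : ℝ} (hp : 0 ≤ p) (hu : 0 ≤ u) (hv : 0 ≤ v)
    (hr : 0 ≤ r) (h : u = 0 ∨ v = 0 ∨ r = 0 → p = 0) :
    Real.negMulLog p + (p * Real.log u + p * Real.log v - p * Real.log r) ≤ u * v / r - p := by
  have hle := negMulLog_add_mul_log_le hp (div_nonneg (mul_nonneg hu hv) hr) fun h' =>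
    h (by simpa [or_assoc] using h')
  by_cases h0 : u = 0 ∨ v = 0 ∨ r = 0
  · simpa [h h0] using hle
  · push Not at h0
    rw [Real.log_div (mul_ne_zero h0.1 h0.2.1) h0.2.2, Real.log_mul h0.1 h0.2.1] at hle
    linarith

lemma sum_negMulLog_add_mul_log_le_log_sum [Fintype ι] {p b : ι → ℝ} (hp : ∀ i, 0 ≤ p i)
    (hp1 : ∑ i, p i = 1) (hb : ∀ i, 0 ≤ b i) (hpb : ∀ i, b i = 0 → p i = 0) :
    ∑ i, (Real.negMulLog (p i) + p i * Real.log (b i)) ≤ Real.log (∑ i, b i) := by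
  set B := ∑ i, b i
  have hB : B ≠ 0 := fun h => by
    have hb0 := (Finset.sum_eq_zero_iff_of_nonneg fun i _ => hb i).1 h
    simp [fun i => hpb i (hb0 i (Finset.mem_univ i))] at hp1
  have hB0 : 0 ≤ B := Finset.sum_nonneg fun i _ => hb i
  have hterm : ∀ i, Real.negMulLog (p i) + p i * Real.log (b i)
      ≤ b i / B - p i + p i * Real.log B := fun i => by
    have h := negMulLog_add_mul_log_le (hp i) (div_nonneg (hb i) hB0) fun h =>
      hpb i ((div_eq_zero_iff.1 h).resolve_right hB)
    by_cases hbi : b i = 0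
    · simp [hbi, hpb i hbi]
    · rw [Real.log_div hbi hB] at h
      linarith
  calc _ ≤ ∑ i, (b i / B - p i + p i * Real.log B) := Finset.sum_le_sum fun i _ => hterm i
    _ = Real.log B := by
      rw [Finset.sum_add_distrib, Finset.sum_sub_distrib, ← Finset.sum_div, ← Finset.sum_mul, hp1,
        div_self hB]
      ring

lemma negMulLog_sum_le (s : Finset ι) {p : ι → ℝ} (hp : ∀ i, 0 ≤ p i) :
    Real.negMulLog (∑ i ∈ s, p i) ≤ ∑ i ∈ s, Real.negMulLog (p i) := by
  simp only [Real.negMulLog_eq_neg, Finset.sum_neg_distrib, neg_le_neg_iff, Finset.sum_mul]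
  refine Finset.sum_le_sum fun i hi => ?_
  rcases (hp i).eq_or_lt with h | h
  · simp [← h]
  · exact mul_le_mul_of_nonneg_left
      (Real.log_le_log h (Finset.single_le_sum (fun j _ => hp j) hi)) h.le

variable [MeasurableSpace X]

/-- The Shannon entropy `H(ξ)` of a finite-valued function `ξ`, that is, of the partition of `X`
into the fibres of `ξ`. Finite partitions are encoded by such functions, so that joins of partitions
are pairings. -/
noncomputable def entropy [Fintype ι] (μ : Measure X) (ξ : X → ι) : ℝ :=
  ∑ i, Real.negMulLog (μ.real (ξ ⁻¹' {i}))

/-- The conditional entropy `H(ξ | η) = H(ξ ∨ η) - H(η)`. -/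
noncomputable def condEntropy [Fintype ι] [Fintype κ] (μ : Measure X) (ξ : X → ι) (η : X → κ) : ℝ :=
  entropy μ (fun x => (ξ x, η x)) - entropy μ η

lemma entropy_nonneg [Fintype ι] (μ : Measure X) [IsProbabilityMeasure μ] (ξ : X → ι) :
    0 ≤ entropy μ ξ :=
  Finset.sum_nonneg fun _ _ => Real.negMulLog_nonneg measureReal_nonneg measureReal_le_one

section Fibres

variable [Fintype ι] [MeasurableSpace ι] [MeasurableSingletonClass ι] {ξ : X → ι}

lemma entropy_comp_measurePreserving {μ : Measure X} {f : X → X} (hf : MeasurePreserving f μ μ)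
    (hξ : Measurable ξ) : entropy μ (ξ ∘ f) = entropy μ ξ :=
  Finset.sum_congr rfl fun i _ => by
    rw [preimage_comp,
      hf.measureReal_preimage (hξ (measurableSet_singleton i)).nullMeasurableSet]

lemma condEntropy_comp_measurePreserving {μ : Measure X} {f : X → X} [Fintype κ]
    [MeasurableSpace κ] [MeasurableSingletonClass κ] {η : X → κ} (hf : MeasurePreserving f μ μ)
    (hξ : Measurable ξ) (hη : Measurable η) :
    condEntropy μ (ξ ∘ f) (η ∘ f) = condEntropy μ ξ η := by
  rw [condEntropy, condEntropy, entropy_comp_measurePreserving hf hη,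
    ← entropy_comp_measurePreserving hf (hξ.prodMk hη)]
  rfl

lemma sum_measureReal_preimage (μ : Measure X) [IsFiniteMeasure μ] (hξ : Measurable ξ) :
    ∑ i, μ.real (ξ ⁻¹' {i}) = μ.real univ := by
  rw [sum_measureReal_preimage_singleton Finset.univ fun i _ => hξ (measurableSet_singleton i)]
  simp

lemma entropy_le_log_card (μ : Measure X) [IsProbabilityMeasure μ] (hξ : Measurable ξ) :
    entropy μ ξ ≤ Real.log (Fintype.card ι) := by
  simpa [entropy] using sum_negMulLog_add_mul_log_le_log_sum (b := fun _ => 1)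
    (fun _ => measureReal_nonneg) ((sum_measureReal_preimage μ hξ).trans probReal_univ)
    (fun _ => zero_le_one) fun _ h => absurd h one_ne_zero

variable (μ : Measure X) [IsFiniteMeasure μ]

lemma sum_measureReal_preimage_prodMk (hξ : Measurable ξ) (ζ : X → τ) (c : τ) :
    ∑ a, μ.real ((fun x => (ξ x, ζ x)) ⁻¹' {(a, c)}) = μ.real (ζ ⁻¹' {c}) := by
  have h := sum_measureReal_preimage (μ.restrict (ζ ⁻¹' {c})) hξ
  simp only [measureReal_restrict_apply (hξ (measurableSet_singleton _)),
    measureReal_restrict_apply_univ] at h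
  rw [← h]
  exact Finset.sum_congr rfl fun a _ => congrArg μ.real (by ext; simp)

lemma measureReal_preimage_comp_singleton [DecidableEq κ] (hξ : Measurable ξ) (g : ι → κ) (j : κ) :
    μ.real ((g ∘ ξ) ⁻¹' {j}) = ∑ i with g i = j, μ.real (ξ ⁻¹' {i}) := by
  rw [sum_measureReal_preimage_singleton _ fun i _ => hξ (measurableSet_singleton i)]
  congr 1
  ext x
  simp

lemma sum_measureReal_preimage_mul_comp [Fintype κ] (hξ : Measurable ξ) (g : ι → κ) (F : κ → ℝ) :
    ∑ i, μ.real (ξ ⁻¹' {i}) * F (g i) = ∑ j, μ.real ((g ∘ ξ) ⁻¹' {j}) * F j := by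
  classical
  simp only [measureReal_preimage_comp_singleton μ hξ, Finset.sum_mul]
  rw [← Finset.sum_fiberwise Finset.univ g]
  exact Finset.sum_congr rfl fun j _ => Finset.sum_congr rfl fun i hi => by
    rw [(Finset.mem_filter.1 hi).2]

lemma sum_measureReal_mul_log_comp [Fintype κ] (hξ : Measurable ξ) (g : ι → κ) :
    ∑ i, μ.real (ξ ⁻¹' {i}) * Real.log (μ.real ((g ∘ ξ) ⁻¹' {g i})) = -entropy μ (g ∘ ξ) := by
  rw [sum_measureReal_preimage_mul_comp μ hξ g fun j => Real.log (μ.real ((g ∘ ξ) ⁻¹' {j})),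
    entropy, ← Finset.sum_neg_distrib]
  simp [Real.negMulLog]

lemma entropy_comp_le [Fintype κ] (hξ : Measurable ξ) (g : ι → κ) :
    entropy μ (g ∘ ξ) ≤ entropy μ ξ := by
  classical
  calc entropy μ (g ∘ ξ) ≤ ∑ j, ∑ i with g i = j, Real.negMulLog (μ.real (ξ ⁻¹' {i})) :=
        Finset.sum_le_sum fun j _ => by
          rw [measureReal_preimage_comp_singleton μ hξ g j]
          exact negMulLog_sum_le _ fun _ => measureReal_nonneg
    _ = entropy μ ξ := Finset.sum_fiberwise _ _ _

lemma entropy_le_of_factorsThrough [Fintype κ] {η : X → κ} (hξ : Measurable ξ)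
    (h : Function.FactorsThrough η ξ) : entropy μ η ≤ entropy μ ξ := by
  rcases isEmpty_or_nonempty X with hX | ⟨⟨x₀⟩⟩
  · simp [entropy, Measure.eq_zero_of_isEmpty μ]
  · have : Nonempty κ := ⟨η x₀⟩
    obtain ⟨g, rfl⟩ := (Function.factorsThrough_iff η).1 h
    exact entropy_comp_le μ hξ g

end Fibres

section Conditional

variable (μ : Measure X) [IsFiniteMeasure μ] [Fintype ι] [Fintype κ] [Fintype τ]
  [MeasurableSpace ι] [MeasurableSingletonClass ι] [MeasurableSpace κ] [MeasurableSingletonClass κ]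
  [MeasurableSpace τ] [MeasurableSingletonClass τ] {ξ : X → ι} {η : X → κ} {ζ : X → τ}

lemma sum_measureReal_mul_div (hξ : Measurable ξ) (hη : Measurable η) (hζ : Measurable ζ) :
    ∑ q : (ι × κ) × τ, μ.real ((fun x => (ξ x, ζ x)) ⁻¹' {(q.1.1, q.2)}) *
      μ.real ((fun x => (η x, ζ x)) ⁻¹' {(q.1.2, q.2)}) / μ.real (ζ ⁻¹' {q.2}) = μ.real univ := by
  rw [Fintype.sum_prod_type_right, ← sum_measureReal_preimage μ hζ]
  refine Finset.sum_congr rfl fun c _ => ?_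
  rw [Fintype.sum_prod_type]
  simp only [← Finset.sum_div, ← Finset.mul_sum, ← Finset.sum_mul]
  rw [sum_measureReal_preimage_prodMk μ hξ ζ, sum_measureReal_preimage_prodMk μ hη ζ,
    mul_self_div_self]

lemma condEntropy_prodMk_le (hξ : Measurable ξ) (hη : Measurable η) (hζ : Measurable ζ) :
    condEntropy μ (fun x => (ξ x, η x)) ζ ≤ condEntropy μ ξ ζ + condEntropy μ η ζ := by
  set ω : X → (ι × κ) × τ := fun x => ((ξ x, η x), ζ x)
  have hω : Measurable ω := (hξ.prodMk hη).prodMk hζ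
  let p (q : (ι × κ) × τ) : ℝ := μ.real (ω ⁻¹' {q})
  let u (q : (ι × κ) × τ) : ℝ := μ.real ((fun x => (ξ x, ζ x)) ⁻¹' {(q.1.1, q.2)})
  let v (q : (ι × κ) × τ) : ℝ := μ.real ((fun x => (η x, ζ x)) ⁻¹' {(q.1.2, q.2)})
  let r (q : (ι × κ) × τ) : ℝ := μ.real (ζ ⁻¹' {q.2})
  have p_eq_zero : ∀ q, u q = 0 ∨ v q = 0 ∨ r q = 0 → p q = 0 := by
    rintro q (h | h | h) <;> refine measureReal_mono_null (fun x hx => ?_) h <;>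
      obtain rfl := hx <;> rfl
  -- Gibbs' inequality relative to `u * v / r`, the law making `ξ`, `η` independent given `ζ`.
  have hterm : ∀ q, Real.negMulLog (p q) +
      (p q * Real.log (u q) + p q * Real.log (v q) - p q * Real.log (r q)) ≤
      u q * v q / r q - p q := fun q =>
    negMulLog_add_mul_log_sub_le measureReal_nonneg measureReal_nonneg measureReal_nonneg
      measureReal_nonneg (p_eq_zero q)
  have h := Finset.sum_le_sum fun q (_ : q ∈ Finset.univ) => hterm q
  simp only [Finset.sum_add_distrib, Finset.sum_sub_distrib] at h
  have hu : ∑ q, p q * Real.log (u q) = -entropy μ fun x => (ξ x, ζ x) :=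
    sum_measureReal_mul_log_comp μ hω fun q => (q.1.1, q.2)
  have hv : ∑ q, p q * Real.log (v q) = -entropy μ fun x => (η x, ζ x) :=
    sum_measureReal_mul_log_comp μ hω fun q => (q.1.2, q.2)
  have hr : ∑ q, p q * Real.log (r q) = -entropy μ ζ :=
    sum_measureReal_mul_log_comp μ hω Prod.snd
  rw [hu, hv, hr, sum_measureReal_mul_div μ hξ hη hζ, sum_measureReal_preimage μ hω, sub_self] at h
  have hp : ∑ q, Real.negMulLog (p q) = entropy μ ω := rfl
  simp only [condEntropy]
  linarith

lemma condEntropy_mono_left {α : Type*} [Fintype α] {ω : X → α} (hξ : Measurable ξ)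
    (hζ : Measurable ζ) (h : Function.FactorsThrough ω ξ) :
    condEntropy μ ω ζ ≤ condEntropy μ ξ ζ := by
  have hpair : Function.FactorsThrough (fun x => (ω x, ζ x)) fun x => (ξ x, ζ x) :=
    fun x y hxy => Prod.ext (h (Prod.ext_iff.1 hxy).1) (Prod.ext_iff.1 hxy).2
  exact sub_le_sub_right (entropy_le_of_factorsThrough μ (hξ.prodMk hζ) hpair) _

lemma condEntropy_anti_right (hξ : Measurable ξ) (hη : Measurable η) (hζ : Measurable ζ)
    (h : Function.FactorsThrough ζ η) : condEntropy μ ξ η ≤ condEntropy μ ξ ζ := by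
  have h₁ := condEntropy_prodMk_le μ hξ hη hζ
  have h₂ : entropy μ (fun x => (ξ x, η x)) ≤ entropy μ fun x => ((ξ x, η x), ζ x) :=
    entropy_comp_le μ ((hξ.prodMk hη).prodMk hζ) Prod.fst
  have h₃ : entropy μ (fun x => (η x, ζ x)) ≤ entropy μ η :=
    entropy_le_of_factorsThrough μ hη fun x y hxy => Prod.ext hxy (h hxy)
  simp only [condEntropy] at h₁ ⊢
  linarith

end Conditional

section ProbabilityMeasure

variable (μ : Measure X) [IsProbabilityMeasure μ] [Fintype ι] [Fintype κ]
  [MeasurableSpace ι] [MeasurableSingletonClass ι] [MeasurableSpace κ] [MeasurableSingletonClass κ]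
  {ξ : X → ι} {η : X → κ}

lemma entropy_prodMk_le (hξ : Measurable ξ) (hη : Measurable η) :
    entropy μ (fun x => (ξ x, η x)) ≤ entropy μ ξ + entropy μ η := by
  have h₁ := condEntropy_anti_right μ hξ hη (measurable_const (a := ())) fun _ _ _ => rfl
  have h₂ : entropy μ (fun x => (ξ x, ())) ≤ entropy μ ξ := entropy_comp_le μ hξ fun i => (i, ())
  have h₃ := entropy_nonneg μ fun _ => ()
  simp only [condEntropy] at h₁
  linarith

lemma integral_comp_fintype (hξ : Measurable ξ) (F : ι → ℝ) :
    ∫ x, F (ξ x) ∂μ = ∑ i, μ.real (ξ ⁻¹' {i}) * F i := by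
  rw [← integral_map hξ.aemeasurable (measurable_of_finite F).aestronglyMeasurable,
    integral_fintype .of_finite]
  exact Finset.sum_congr rfl fun i _ => by
    rw [map_measureReal_apply hξ (measurableSet_singleton i), smul_eq_mul]

lemma entropy_add_integral_le_log_sum (hξ : Measurable ξ) {G : X → ℝ} (hG : Integrable G μ)
    {b : ι → ℝ} (hb : ∀ i, 0 ≤ b i) (hGb : ∀ x, Real.exp (G x) ≤ b (ξ x)) :
    entropy μ ξ + ∫ x, G x ∂μ ≤ Real.log (∑ i, b i) := by
  have hint : Integrable (fun x => Real.log (b (ξ x))) μ :=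
    Integrable.comp_measurable (g := fun i => Real.log (b i)) .of_finite hξ
  calc entropy μ ξ + ∫ x, G x ∂μ
      ≤ entropy μ ξ + ∫ x, Real.log (b (ξ x)) ∂μ :=
        add_le_add_right (integral_mono hG hint fun x => (Real.le_log_iff_exp_le
          ((Real.exp_pos _).trans_le (hGb x))).2 (hGb x)) _
    _ = ∑ i, (Real.negMulLog (μ.real (ξ ⁻¹' {i})) + μ.real (ξ ⁻¹' {i}) * Real.log (b i)) := by
        rw [integral_comp_fintype μ hξ fun i => Real.log (b i), Finset.sum_add_distrib, entropy]
    _ ≤ Real.log (∑ i, b i) := by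
        refine sum_negMulLog_add_mul_log_le_log_sum (fun _ => measureReal_nonneg)
          ((sum_measureReal_preimage μ hξ).trans probReal_univ) hb fun i hi => ?_
        have hempty : ξ ⁻¹' {i} = ∅ := eq_empty_of_forall_notMem fun x hx =>
          (Real.exp_pos _).not_ge ((hGb x).trans_eq ((congrArg b hx).trans hi))
        simp [hempty]

end ProbabilityMeasure

end Entropy

section Itinerary

variable {ι κ : Type*}

/-- The itinerary `(ξ x, ξ (f x), …, ξ (f^{n-1} x))`; its fibres are the cells of the refinement
`⋁_{i<n} f^{-i} ξ`. -/
def itinerary (f : X → X) (ξ : X → ι) (n : ℕ) (x : X) : Fin n → ι := fun i => ξ (f^[i] x)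

lemma itinerary_eq_iff {f : X → X} {ξ : X → ι} {n : ℕ} {x y : X} :
    itinerary f ξ n x = itinerary f ξ n y ↔ ∀ i < n, ξ (f^[i] x) = ξ (f^[i] y) := by
  simp [itinerary, funext_iff, Fin.forall_iff]

lemma itinerary_factorsThrough_of_le (f : X → X) (ξ : X → ι) {m n : ℕ} (h : m ≤ n) :
    Function.FactorsThrough (itinerary f ξ m) (itinerary f ξ n) := fun _ _ hxy =>
  itinerary_eq_iff.2 fun i hi => itinerary_eq_iff.1 hxy i (hi.trans_le h)

lemma itinerary_factorsThrough_comp {f : X → X} (ξ : X → ι) {i n : ℕ} (h : i < n) :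
    Function.FactorsThrough (ξ ∘ f^[i]) (itinerary f ξ n) := fun _ _ hxy =>
  itinerary_eq_iff.1 hxy i h

lemma itinerary_add_factorsThrough (f : X → X) (ξ : X → ι) (m n : ℕ) :
    Function.FactorsThrough (itinerary f ξ (m + n))
      fun x => (itinerary f ξ m x, itinerary f ξ n (f^[m] x)) := by
  intro x y hxy
  rw [Prod.mk.injEq, itinerary_eq_iff, itinerary_eq_iff] at hxy
  refine itinerary_eq_iff.2 fun i hi => ?_
  rcases lt_or_ge i m with h | h
  · exact hxy.1 i h
  · obtain ⟨j, rfl⟩ := Nat.exists_eq_add_of_le' h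
    simpa only [Function.iterate_add_apply] using hxy.2 j (by lia)

lemma itinerary_succ_factorsThrough (f : X → X) (ξ : X → ι) (n : ℕ) :
    Function.FactorsThrough (itinerary f ξ (n + 1))
      fun x => (itinerary f ξ n x, (ξ ∘ f^[n]) x) := by
  intro x y hxy
  rw [Prod.mk.injEq, itinerary_eq_iff] at hxy
  exact itinerary_eq_iff.2 fun i hi => (Nat.lt_succ_iff_lt_or_eq.1 hi).elim (hxy.1 i)
    fun h => h ▸ hxy.2

lemma itinerary_mul_factorsThrough (f : X → X) (ξ : X → ι) (n N : ℕ) :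
    Function.FactorsThrough (itinerary f ξ (n * N))
      (itinerary f^[N] (itinerary f ξ N) n) := by
  intro x y hxy
  refine itinerary_eq_iff.2 fun i hi => ?_
  have hN : 0 < N := Nat.pos_of_mul_pos_left (Nat.zero_lt_of_lt hi)
  have h := itinerary_eq_iff.1 (itinerary_eq_iff.1 hxy (i / N) (Nat.div_lt_of_lt_mul
    (by rwa [mul_comm]))) (i % N) (Nat.mod_lt i hN)
  rwa [← Function.iterate_mul, ← Function.iterate_add_apply, ← Function.iterate_add_apply,
    Nat.mod_add_div] at h

variable [MeasurableSpace X] [MeasurableSpace ι] [MeasurableSpace κ] {f : X → X} {ξ : X → ι}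
  {η : X → κ}

lemma measurable_itinerary (hξ : Measurable ξ) (hf : Measurable f) (n : ℕ) :
    Measurable (itinerary f ξ n) :=
  measurable_pi_lambda _ fun i => hξ.comp (hf.iterate i)

variable (μ : Measure X) [Fintype ι] [MeasurableSingletonClass ι]

lemma condEntropy_itinerary_le [Fintype κ] [MeasurableSingletonClass κ] [IsFiniteMeasure μ]
    (hf : MeasurePreserving f μ μ) (hξ : Measurable ξ) (hη : Measurable η) (n : ℕ) :
    condEntropy μ (itinerary f ξ n) (itinerary f η n) ≤ n * condEntropy μ ξ η := by
  have hξn := measurable_itinerary hξ hf.measurable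
  have hηn := measurable_itinerary hη hf.measurable
  induction n with
  | zero =>
    simpa [condEntropy] using entropy_le_of_factorsThrough μ (hηn 0)
      fun _ _ _ => Subsingleton.elim (itinerary f ξ 0 _, itinerary f η 0 _) _
  | succ n ih =>
    have hξ' := hξ.comp (hf.iterate n).measurable
    have hη' := hη.comp (hf.iterate n).measurable
    calc condEntropy μ (itinerary f ξ (n + 1)) (itinerary f η (n + 1))
        ≤ condEntropy μ (fun x => (itinerary f ξ n x, (ξ ∘ f^[n]) x)) (itinerary f η (n + 1)) :=
          condEntropy_mono_left μ ((hξn n).prodMk hξ') (hηn _)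
            (itinerary_succ_factorsThrough f ξ n)
      _ ≤ condEntropy μ (itinerary f ξ n) (itinerary f η (n + 1)) +
          condEntropy μ (ξ ∘ f^[n]) (itinerary f η (n + 1)) :=
          condEntropy_prodMk_le μ (hξn n) hξ' (hηn _)
      _ ≤ condEntropy μ (itinerary f ξ n) (itinerary f η n) +
          condEntropy μ (ξ ∘ f^[n]) (η ∘ f^[n]) := add_le_add
          (condEntropy_anti_right μ (hξn n) (hηn _) (hηn n)
            (itinerary_factorsThrough_of_le f η n.le_succ))
          (condEntropy_anti_right μ hξ' (hηn _) hη'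
            (itinerary_factorsThrough_comp η n.lt_succ_self))
      _ ≤ n * condEntropy μ ξ η + condEntropy μ ξ η :=
          add_le_add ih (condEntropy_comp_measurePreserving (hf.iterate n) hξ hη).le
      _ = (n + 1 : ℕ) * condEntropy μ ξ η := by push_cast; ring

variable [IsProbabilityMeasure μ]

lemma entropy_itinerary_le (hf : Measurable f) (hξ : Measurable ξ) (n : ℕ) :
    entropy μ (itinerary f ξ n) ≤ n * Real.log (Fintype.card ι) := by
  simpa using entropy_le_log_card μ (measurable_itinerary hξ hf n)

lemma mul_entropy_itinerary_le (hf : Measurable f) (hξ : Measurable ξ) (n q : ℕ) :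
    q * entropy μ (itinerary f ξ n) ≤
      ∑ i ∈ Finset.range n, entropy μ (itinerary f ξ q ∘ f^[i]) +
        q ^ 2 * Real.log (Fintype.card ι) := by
  set H : ℕ → ℝ := fun k => entropy μ (itinerary f ξ k)
  have hξk := measurable_itinerary hξ hf
  have step : ∀ i, H (i + q) - H i ≤ entropy μ (itinerary f ξ q ∘ f^[i]) := fun i => by
    have h := (entropy_le_of_factorsThrough μ ((hξk i).prodMk ((hξk q).comp (hf.iterate i)))
      (itinerary_add_factorsThrough f ξ i q)).trans
      (entropy_prodMk_le μ (hξk i) ((hξk q).comp (hf.iterate i)))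
    exact sub_le_iff_le_add'.2 h
  have telescope : ∑ i ∈ Finset.range n, (H (i + q) - H i) =
      ∑ j ∈ Finset.range q, (H (n + j) - H j) := by
    have h₁ := Finset.sum_range_add H n q
    have h₂ := Finset.sum_range_add H q n
    rw [add_comm q n] at h₂
    simp only [Finset.sum_sub_distrib, fun i => add_comm i q]
    linarith
  have lower : ∀ j ∈ Finset.range q, H n - q * Real.log (Fintype.card ι) ≤ H (n + j) - H j :=
    fun j hj => sub_le_sub (entropy_le_of_factorsThrough μ (hξk _)
      (itinerary_factorsThrough_of_le f ξ (n.le_add_right j)))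
      ((entropy_itinerary_le μ hf hξ j).trans (by
        gcongr
        exact (Finset.mem_range.1 hj).le))
  have h := (Finset.card_nsmul_le_sum _ _ _ lower).trans
    (telescope.symm.le.trans (Finset.sum_le_sum fun i _ => step i))
  rw [Finset.card_range, nsmul_eq_mul] at h
  linarith

end Itinerary

section Birkhoff

lemma birkhoff_succ (f : X → X) (g : X → ℝ) (n : ℕ) (x : X) :
    birkhoff f g (n + 1) x = birkhoff f g n x + g (f^[n] x) :=
  Finset.sum_range_succ _ _

lemma birkhoff_mul (f : X → X) (g : X → ℝ) (n N : ℕ) (x : X) :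
    birkhoff f g (n * N) x = birkhoff f^[N] (birkhoff f g N) n x := by
  change birkhoffSum f g _ x = birkhoffSum f^[N] (birkhoffSum f g N) n x
  induction n with
  | zero => simp
  | succ n ih =>
    rw [add_one_mul, birkhoffSum_add, birkhoffSum_succ, ih, ← Function.iterate_mul, mul_comm N]

lemma birkhoff_sub_const_mul (f : X → X) (φ ψ : X → ℝ) (c : ℝ) (n : ℕ) (x : X) :
    birkhoff f (fun y => φ y - c * ψ y) n x = birkhoff f φ n x - c * birkhoff f ψ n x := by
  simp only [birkhoff, Finset.sum_sub_distrib, Finset.mul_sum]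

lemma birkhoff_le {f : X → X} {g : X → ℝ} {M : ℝ} (hg : ∀ x, g x ≤ M) (n : ℕ) (x : X) :
    birkhoff f g n x ≤ n * M := by
  simpa [birkhoff] using Finset.sum_le_card_nsmul (Finset.range n) _ M fun i _ => hg (f^[i] x)

lemma le_birkhoff {f : X → X} {g : X → ℝ} {m : ℝ} (hg : ∀ x, m ≤ g x) (n : ℕ) (x : X) :
    n * m ≤ birkhoff f g n x := by
  simpa [birkhoff] using Finset.card_nsmul_le_sum (Finset.range n) _ m fun i _ => hg (f^[i] x)

lemma continuous_birkhoff [TopologicalSpace X] {f : X → X} {g : X → ℝ} (hf : Continuous f)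
    (hg : Continuous g) (n : ℕ) : Continuous (birkhoff f g n) :=
  continuous_finsetSum _ fun i _ => hg.comp (hf.iterate i)

lemma integral_birkhoff [MeasurableSpace X] {μ : Measure X} {f : X → X} {g : X → ℝ}
    (hf : MeasurePreserving f μ μ) (hg : Integrable g μ) (n : ℕ) :
    ∫ x, birkhoff f g n x ∂μ = n * ∫ x, g x ∂μ := by
  have hint : ∀ i, ∫ x, g (f^[i] x) ∂μ = ∫ x, g x ∂μ := fun i => by
    have hi := hf.iterate i
    rw [← integral_map hi.aemeasurable (hi.map_eq.symm ▸ hg.aestronglyMeasurable), hi.map_eq]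
  simp only [birkhoff]
  rw [integral_finsetSum (f := fun i x => g (f^[i] x)) _
    fun i _ => (hf.iterate i).integrable_comp_of_integrable hg]
  simp [hint]

end Birkhoff

section Bowen

variable [MetricSpace X] {f : X → X} {n : ℕ} {ε τ : ℝ} {g : X → ℝ} {x y : X}

lemma dist_iterate_le_dynDist (f : X → X) {i : ℕ} (hi : i < n) (x y : X) :
    dist (f^[i] x) (f^[i] y) ≤ dynDist f n x y :=
  le_ciSup (f := fun i : Fin n => dist (f^[(i : ℕ)] x) (f^[(i : ℕ)] y))
    (Set.finite_range _).bddAbove ⟨i, hi⟩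

lemma dynDist_le_of_forall (hε : 0 ≤ ε) (h : ∀ i < n, dist (f^[i] x) (f^[i] y) ≤ ε) :
    dynDist f n x y ≤ ε :=
  Real.iSup_le (fun i => h i i.2) hε

lemma dynDist_nonneg (f : X → X) (n : ℕ) (x y : X) : 0 ≤ dynDist f n x y :=
  Real.iSup_nonneg fun _ => dist_nonneg

lemma dynDist_self (f : X → X) (n : ℕ) (x : X) : dynDist f n x x = 0 := by
  simp [dynDist]

lemma dynDist_comm (f : X → X) (n : ℕ) (x y : X) : dynDist f n x y = dynDist f n y x := by
  simp only [dynDist, dist_comm]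

lemma dynDist_triangle (f : X → X) (n : ℕ) (x y z : X) :
    dynDist f n x z ≤ dynDist f n x y + dynDist f n y z :=
  dynDist_le_of_forall (add_nonneg (dynDist_nonneg ..) (dynDist_nonneg ..)) fun _ hi =>
    (dist_triangle _ _ _).trans
      (add_le_add (dist_iterate_le_dynDist f hi x y) (dist_iterate_le_dynDist f hi y z))

lemma dynDist_iterate_le (f : X → X) (n : ℕ) {N : ℕ} (hN : 0 < N) (x y : X) :
    dynDist f^[N] n x y ≤ dynDist f (n * N) x y := by
  refine dynDist_le_of_forall (dynDist_nonneg ..) fun i hi => ?_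
  rw [← Function.iterate_mul, mul_comm]
  exact dist_iterate_le_dynDist f (Nat.mul_lt_mul_of_pos_right hi hN) x y

lemma abs_birkhoff_sub_le (h : ∀ x y, dist x y ≤ ε → |g x - g y| ≤ τ)
    (hxy : dynDist f n x y ≤ ε) : |birkhoff f g n x - birkhoff f g n y| ≤ n * τ := by
  rw [birkhoff, birkhoff, ← Finset.sum_sub_distrib]
  calc |∑ i ∈ Finset.range n, (g (f^[i] x) - g (f^[i] y))|
      ≤ ∑ i ∈ Finset.range n, |g (f^[i] x) - g (f^[i] y)| := Finset.abs_sum_le_sum_abs _ _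
    _ ≤ (Finset.range n).card • τ := Finset.sum_le_card_nsmul _ _ τ fun i hi =>
        h _ _ ((dist_iterate_le_dynDist f (Finset.mem_range.1 hi) x y).trans hxy)
    _ = n * τ := by simp

lemma exists_pos_forall_abs_sub_le [CompactSpace X] (hg : Continuous g) (hτ : 0 < τ) :
    ∃ ε > 0, ∀ x y, dist x y ≤ ε → |g x - g y| ≤ τ := by
  obtain ⟨ε, hε, h⟩ := Metric.uniformContinuous_iff_le.1
    (CompactSpace.uniformContinuous_of_continuous hg) τ hτ
  exact ⟨ε, hε, fun x y hxy => h hxy⟩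

lemma IsSpanningSet.iterate {N : ℕ} {Z : Set X} {F : Finset X} (hN : 0 < N)
    (hF : IsSpanningSet f (n * N) ε Z F) : IsSpanningSet f^[N] n ε Z F := fun y hy =>
  let ⟨x, hx, hxy⟩ := hF y hy
  ⟨x, hx, (dynDist_iterate_le f n hN x y).trans hxy⟩

lemma IsSeparatedSet.sum_exp_le {Z : Set X} {E F : Finset X} (hE : IsSeparatedSet f n (2 * ε) E)
    (hEZ : ↑E ⊆ Z) (hF : IsSpanningSet f n ε Z F) (hg : ∀ x y, dist x y ≤ ε → |g x - g y| ≤ τ) :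
    ∑ x ∈ E, Real.exp (birkhoff f g n x) ≤
      Real.exp (n * τ) * ∑ x ∈ F, Real.exp (birkhoff f g n x) := by
  classical
  choose! p hpF hp using fun x (hx : x ∈ E) => hF x (hEZ hx)
  have p_injOn : Set.InjOn p E := fun x hx y hy hxy => by
    by_contra hne
    have h := dynDist_triangle f n x (p x) y
    have hy' := hp y hy
    rw [dynDist_comm f n x (p x)] at h
    rw [← hxy] at hy'
    linarith [hE x hx y hy hne, hp x hx]
  calc ∑ x ∈ E, Real.exp (birkhoff f g n x)
      ≤ ∑ x ∈ E, Real.exp (n * τ) * Real.exp (birkhoff f g n (p x)) :=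
        Finset.sum_le_sum fun x hx => by
          rw [← Real.exp_add, Real.exp_le_exp]
          linarith [abs_le.1 (abs_birkhoff_sub_le hg (hp x hx))]
    _ ≤ Real.exp (n * τ) * ∑ x ∈ F, Real.exp (birkhoff f g n x) := by
        rw [← Finset.mul_sum,
          ← Finset.sum_image (f := fun x => Real.exp (birkhoff f g n x)) p_injOn]
        gcongr
        exact Finset.image_subset_iff.2 hpF

lemma IsSeparatedSet.card_le {Z : Set X} {E F : Finset X} (hE : IsSeparatedSet f n (2 * ε) E)
    (hEZ : ↑E ⊆ Z) (hF : IsSpanningSet f n ε Z F) : E.card ≤ F.card := by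
  simpa [birkhoff] using hE.sum_exp_le (g := 0) (τ := 0) hEZ hF (by simp)

section Compact

variable [CompactSpace X]

lemma exists_isSpanningSet (hf : Continuous f) (n : ℕ) (hε : 0 < ε) :
    ∃ F : Finset X, IsSpanningSet f n ε univ F := by
  have hball : ∀ x, {y | ∀ i : Fin n, dist (f^[i] x) (f^[i] y) < ε} ∈ 𝓝 x := fun x => by
    simp only [ofPred_forall]
    refine Filter.iInter_mem.2 fun i => ?_
    exact (continuous_const.dist (hf.iterate i)).continuousAt.eventually_lt continuousAt_const
      (by simpa using hε)
  obtain ⟨F, -, hF⟩ := isCompact_univ.elim_nhds_subcover _ fun x _ => hball x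
  refine ⟨F, fun y hy => ?_⟩
  obtain ⟨x, hx, hxy⟩ := mem_iUnion₂.1 (hF hy)
  exact ⟨x, hx, dynDist_le_of_forall hε.le fun i hi => (hxy ⟨i, hi⟩).le⟩

lemma exists_isSeparatedSet_isSpanningSet (hf : Continuous f) (n : ℕ) (hε : 0 < ε) (Z : Set X) :
    ∃ E : Finset X, ↑E ⊆ Z ∧ IsSeparatedSet f n ε E ∧ IsSpanningSet f n ε Z E := by
  classical
  obtain ⟨F, hF⟩ := exists_isSpanningSet hf n (half_pos hε)
  let cards : Set ℕ := {k | ∃ E : Finset X, ↑E ⊆ Z ∧ IsSeparatedSet f n ε E ∧ E.card = k}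
  have cards_bdd : BddAbove cards := ⟨F.card, by
    rintro _ ⟨E, -, hE, rfl⟩
    exact IsSeparatedSet.card_le (by rwa [mul_div_cancel₀ ε two_ne_zero]) (subset_univ _) hF⟩
  obtain ⟨E, hEZ, hE, hcard⟩ := Nat.sSup_mem
    (⟨0, ∅, by simp [IsSeparatedSet]⟩ : cards.Nonempty) cards_bdd
  refine ⟨E, hEZ, hE, fun y hy => ?_⟩
  by_contra! hfar
  have hyE : y ∉ E := fun h => by linarith [hfar y h, dynDist_self f n y]
  have hins : IsSeparatedSet f n ε (insert y E) := by
    intro a ha b hb hab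
    rcases Finset.mem_insert.1 ha with rfl | ha <;> rcases Finset.mem_insert.1 hb with rfl | hb
    · exact absurd rfl hab
    · exact (hfar b hb).trans_eq (dynDist_comm f n b a)
    · exact hfar a ‹a ∈ E›
    · exact hE a ha b hb hab
  have hle := le_csSup (a := (insert y E).card) cards_bdd
    ⟨insert y E, by simp [insert_subset_iff, hy, hEZ], hins, rfl⟩
  rw [Finset.card_insert_of_notMem hyE, hcard] at hle
  lia

end Compact

end Bowen

section SepSum

variable [MetricSpace X] {f : X → X} {n : ℕ} {ε : ℝ} {g : X → ℝ}

lemma sepSum_le {a : ℝ}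
    (h : ∀ E : Finset X, IsSeparatedSet f n ε E → ∑ x ∈ E, Real.exp (birkhoff f g n x) ≤ a) :
    sepSum f g n ε ≤ a :=
  csSup_le ⟨_, ∅, by simp [IsSeparatedSet], rfl⟩ (by rintro _ ⟨E, hE, rfl⟩; exact h E hE)

variable [CompactSpace X]

lemma bddAbove_separated_sums (hf : Continuous f) (hg : Continuous g) (n : ℕ) (hε : 0 < ε) :
    BddAbove {r : ℝ | ∃ E : Finset X, IsSeparatedSet f n ε E ∧
      r = ∑ x ∈ E, Real.exp (birkhoff f g n x)} := by
  obtain ⟨F, hF⟩ := exists_isSpanningSet hf n (half_pos hε)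
  obtain ⟨C, hC⟩ := (isCompact_univ.image (hg.abs)).bddAbove
  have hgC : ∀ x y, |g x - g y| ≤ C + C := fun x y => (abs_sub _ _).trans
    (add_le_add (hC ⟨x, mem_univ x, rfl⟩) (hC ⟨y, mem_univ y, rfl⟩))
  refine ⟨Real.exp (n * (C + C)) * ∑ x ∈ F, Real.exp (birkhoff f g n x), ?_⟩
  rintro _ ⟨E, hE, rfl⟩
  exact IsSeparatedSet.sum_exp_le (by rwa [mul_div_cancel₀ ε two_ne_zero]) (subset_univ _) hF
    fun x y _ => hgC x y

lemma IsSeparatedSet.sum_exp_le_sepSum (hf : Continuous f) (hg : Continuous g) (hε : 0 < ε)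
    {E : Finset X} (hE : IsSeparatedSet f n ε E) :
    ∑ x ∈ E, Real.exp (birkhoff f g n x) ≤ sepSum f g n ε :=
  le_csSup (bddAbove_separated_sums hf hg n hε) ⟨E, hE, rfl⟩

lemma sepSum_pos [Nonempty X] (hf : Continuous f) (hg : Continuous g) (n : ℕ) (hε : 0 < ε) :
    0 < sepSum f g n ε := by
  obtain ⟨x⟩ := ‹Nonempty X›
  have hsep : IsSeparatedSet f n ε {x} := fun a ha b hb hab =>
    absurd ((Finset.mem_singleton.1 ha).trans (Finset.mem_singleton.1 hb).symm) hab
  exact (Finset.sum_pos (fun _ _ => Real.exp_pos _) (Finset.singleton_nonempty x)).trans_le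
    (hsep.sum_exp_le_sepSum hf hg hε)

lemma exists_isSeparatedSet_lt_log_sum_exp [Nonempty X] (hf : Continuous f) (hg : Continuous g)
    (hε : 0 < ε) {a : ℝ} (ha : a < Real.log (sepSum f g n ε)) :
    ∃ E : Finset X, E.Nonempty ∧ IsSeparatedSet f n ε E ∧
      a < Real.log (∑ x ∈ E, Real.exp (birkhoff f g n x)) := by
  rw [Real.lt_log_iff_exp_lt (sepSum_pos hf hg n hε)] at ha
  have hne : {r : ℝ | ∃ E : Finset X, IsSeparatedSet f n ε E ∧
      r = ∑ x ∈ E, Real.exp (birkhoff f g n x)}.Nonempty := ⟨_, ∅, by simp [IsSeparatedSet], rfl⟩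
  obtain ⟨_, ⟨E, hE, rfl⟩, hlt⟩ := exists_lt_of_lt_csSup hne ha
  refine ⟨E, ?_, hE, (Real.lt_log_iff_exp_lt ((Real.exp_pos a).trans hlt)).2 hlt⟩
  rw [Finset.nonempty_iff_ne_empty]
  rintro rfl
  exact hlt.not_gt (by simpa using Real.exp_pos a)

end SepSum

section KSEntropy

variable [MeasurableSpace X] {μ : Measure X} {f : X → X} {k : ℕ} {ξ : X → Fin k}

lemma partitionEntropy_fibres (μ : Measure X) (f : X → X) (ξ : X → Fin k) (n : ℕ) :
    partitionEntropy μ f (fun i => ξ ⁻¹' {i}) n = entropy μ (itinerary f ξ n) :=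
  Finset.sum_congr rfl fun w _ => by
    have hcell : cellOf f (fun i => ξ ⁻¹' {i}) w = itinerary f ξ n ⁻¹' {w} := by
      ext x
      simp [cellOf, itinerary, funext_iff]
    rw [hcell, measureReal_def]

lemma isMeasPartition_fibres (hξ : Measurable ξ) : IsMeasPartition fun i => ξ ⁻¹' {i} :=
  ⟨fun i => hξ (measurableSet_singleton i),
    fun _ _ hij => Disjoint.preimage _ (disjoint_singleton.2 hij), by ext x; simp⟩

lemma IsMeasPartition.exists_eq_fibres {P : Fin k → Set X} (hP : IsMeasPartition P) :
    ∃ ξ : X → Fin k, Measurable ξ ∧ P = fun i => ξ ⁻¹' {i} := by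
  obtain ⟨hmeas, hdisj, hcover⟩ := hP
  choose ξ hξ using fun x => mem_iUnion.1 (hcover ▸ mem_univ x)
  have hPξ : P = fun i => ξ ⁻¹' {i} := by
    ext i x
    refine ⟨fun hx => ?_, fun hx => hx ▸ hξ x⟩
    by_contra hne
    exact disjoint_left.1 (hdisj hne) (hξ x) hx
  exact ⟨ξ, measurable_to_countable' fun i => by simpa [hPξ] using hmeas i, hPξ⟩

lemma coe_le_ksEntropy [IsFiniteMeasure μ] {ι : Type*} [Fintype ι] [MeasurableSpace ι]
    [MeasurableSingletonClass ι] {ξ : X → ι} (hf : Measurable f) (hξ : Measurable ξ) {c : ℝ}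
    (h : ∀ q : ℕ, q * c ≤ entropy μ (itinerary f ξ q)) : (c : EReal) ≤ ksEntropy μ f := by
  let e := Fintype.equivFin ι
  have heξ : Measurable (e ∘ ξ) := (measurable_of_finite e).comp hξ
  refine le_iSup₂_of_le _ _ (le_iSup_of_le (isMeasPartition_fibres heξ) (le_iInf fun n => ?_))
  rw [EReal.coe_le_coe_iff, partitionEntropy_fibres, le_inv_mul_iff₀ (by positivity)]
  refine (by exact_mod_cast h (n + 1) : _ ≤ _).trans
    (entropy_le_of_factorsThrough μ (measurable_itinerary heξ hf (n + 1)) fun x y hxy => ?_)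
  exact itinerary_eq_iff.2 fun i hi => e.injective (itinerary_eq_iff.1 hxy i hi)

lemma ksEntropy_le_coe {c : ℝ} (h : ∀ (k : ℕ) (ξ : X → Fin k), Measurable ξ →
    ∃ n > 0, entropy μ (itinerary f ξ n) ≤ n * c) : ksEntropy μ f ≤ (c : EReal) := by
  refine iSup₂_le fun k P => iSup_le fun hP => ?_
  obtain ⟨ξ, hξ, rfl⟩ := hP.exists_eq_fibres
  obtain ⟨n, hn, hle⟩ := h k ξ hξ
  obtain ⟨n, rfl⟩ := Nat.exists_eq_add_of_le' hn
  refine iInf_le_of_le n ?_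
  rw [EReal.coe_le_coe_iff, partitionEntropy_fibres, inv_mul_le_iff₀ (by positivity)]
  exact_mod_cast hle

end KSEntropy

section CompactApproximation

variable {ι κ : Type*}

lemma exists_pos_forall_dist_le_imp_eq [Finite ι] [MetricSpace X] {K : ι → Set X}
    (hK : ∀ i, IsCompact (K i)) (hdisj : Pairwise (Function.onFun Disjoint K)) :
    ∃ ε > 0, ∀ i j, ∀ x ∈ K i, ∀ y ∈ K j, dist x y ≤ ε → i = j := by
  have hev : ∀ᶠ ε : ℝ in 𝓝[>] 0, ∀ i j, ∀ x ∈ K i, ∀ y ∈ K j, dist x y ≤ ε → i = j := by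
    refine eventually_all.2 fun i => eventually_all.2 fun j => ?_
    by_cases hij : i = j
    · exact Eventually.of_forall fun _ _ _ _ _ _ => hij
    obtain ⟨r, hr, h⟩ := Metric.exists_pos_forall_lt_edist (hK i) (hK j).isClosed (hdisj hij)
    filter_upwards [Ioo_mem_nhdsGT (show (0 : ℝ) < r from hr)] with ε hε x hx y hy hxy
    have hlt : (r : ℝ) < dist x y := by
      have hr := h x hx y hy
      rwa [edist_nndist, ENNReal.coe_lt_coe, ← NNReal.coe_lt_coe, coe_nndist] at hr
    linarith [hε.2]
  obtain ⟨ε, hε, hε0⟩ := (hev.and self_mem_nhdsWithin).exists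
  exact ⟨ε, hε0, hε⟩

lemma ncard_image_setOf_mem_closedBall_le [MetricSpace X] {K : ι → Set X} {ε : ℝ}
    (h : ∀ i j, ∀ x ∈ K i, ∀ y ∈ K j, dist x y ≤ ε → i = j) (x : X) :
    ((fun y => {i | y ∈ K i}) '' Metric.closedBall x (ε / 2)).ncard ≤ 2 := by
  have hball : ∀ i j, ∀ y ∈ Metric.closedBall x (ε / 2), ∀ z ∈ Metric.closedBall x (ε / 2),
      y ∈ K i → z ∈ K j → i = j := fun i j y hy z hz hyi hzj =>
    h i j y hyi z hzj ((dist_triangle_right y z x).trans (by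
      linarith [Metric.mem_closedBall.1 hy, Metric.mem_closedBall.1 hz]))
  have hsub : ∃ c, (fun y => {i | y ∈ K i}) '' Metric.closedBall x (ε / 2) ⊆ {∅, c} := by
    by_cases hx : ∃ i, ∃ y ∈ Metric.closedBall x (ε / 2), y ∈ K i
    · obtain ⟨i, y, hy, hyi⟩ := hx
      refine ⟨{i}, ?_⟩
      rintro _ ⟨z, hz, rfl⟩
      refine Set.subset_singleton_iff_eq.1 fun j hj => (hball i j y hy z hz hyi hj).symm
    · refine ⟨∅, ?_⟩
      rintro _ ⟨z, hz, rfl⟩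
      exact Or.inl (eq_empty_of_forall_notMem fun j hj => hx ⟨j, z, hz, hj⟩)
  obtain ⟨c, hc⟩ := hsub
  exact (ncard_le_ncard hc).trans ((ncard_insert_le _ _).trans (by simp))

variable [Fintype ι]

lemma sum_negMulLog_of_const_on_fibre [MeasurableSpace X] (μ : Measure X) {ξ : X → ι} {η : X → κ}
    {c : κ} (h : ∀ x y, η x = c → η y = c → ξ x = ξ y) :
    ∑ i, Real.negMulLog (μ.real ((fun x => (ξ x, η x)) ⁻¹' {(i, c)})) =
      Real.negMulLog (μ.real (η ⁻¹' {c})) := by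
  rcases (η ⁻¹' {c}).eq_empty_or_nonempty with hempty | ⟨x₀, hx₀⟩
  · have hpair : ∀ i, (fun x => (ξ x, η x)) ⁻¹' {(i, c)} = ∅ := fun i =>
      eq_empty_of_forall_notMem fun x hx => hempty.subset (Prod.ext_iff.1 hx).2
    simp [hempty, hpair]
  · rw [Finset.sum_eq_single (ξ x₀) (fun i _ hi => ?_) (by simp)]
    · congr 2
      ext x
      simpa using fun hx => h x x₀ hx hx₀
    · have hpair : (fun x => (ξ x, η x)) ⁻¹' {(i, c)} = ∅ := eq_empty_of_forall_notMem fun x hx =>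
        hi ((Prod.ext_iff.1 hx).1.symm.trans (h x x₀ (Prod.ext_iff.1 hx).2 hx₀))
      simp [hpair]

lemma condEntropy_le_sum_negMulLog [MeasurableSpace X] (μ : Measure X) [IsProbabilityMeasure μ]
    [Fintype κ] {ξ : X → ι} {η : X → κ} {c₀ : κ}
    (h : ∀ c ≠ c₀, ∀ x y, η x = c → η y = c → ξ x = ξ y) :
    condEntropy μ ξ η ≤
      ∑ i, Real.negMulLog (μ.real ((fun x => (ξ x, η x)) ⁻¹' {(i, c₀)})) := by
  classical
  rw [condEntropy, entropy, entropy, Fintype.sum_prod_type_right, ← Finset.sum_sub_distrib,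
    Finset.sum_eq_single c₀ (fun c _ hc => sub_eq_zero.2
      (sum_negMulLog_of_const_on_fibre μ (h c hc))) (by simp)]
  exact sub_le_self _ (Real.negMulLog_nonneg measureReal_nonneg measureReal_le_one)

lemma condEntropy_setOf_mem_le [MeasurableSpace X] (μ : Measure X) [IsProbabilityMeasure μ]
    {ξ : X → ι} {K : ι → Set X} (hKξ : ∀ i, K i ⊆ ξ ⁻¹' {i}) :
    condEntropy μ ξ (fun x => {i | x ∈ K i}) ≤
      ∑ i, Real.negMulLog (μ.real (ξ ⁻¹' {i} \ K i)) := by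
  have hfibre : ∀ i, (fun x => (ξ x, {j | x ∈ K j})) ⁻¹' {(i, ∅)} = ξ ⁻¹' {i} \ K i := fun i => by
    ext x
    simp only [mem_preimage, mem_singleton_iff, Prod.mk.injEq, Set.mem_sdiff,
      eq_empty_iff_forall_notMem]
    refine and_congr_right fun hx => ⟨fun h => h i, fun h j hj => h ?_⟩
    obtain rfl : j = i := (hKξ j hj).symm.trans hx
    exact hj
  simp only [← hfibre]
  refine condEntropy_le_sum_negMulLog μ fun c hc x y hx hy => ?_
  obtain ⟨i, hi⟩ := nonempty_iff_ne_empty.2 hc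
  exact (hKξ i (hx.symm.subset hi)).trans (hKξ i (hy.symm.subset hi)).symm

lemma exists_isCompact_negMulLog_sdiff_lt [TopologicalSpace X] [T2Space X] [MeasurableSpace X]
    [BorelSpace X] (μ : Measure X) [IsFiniteMeasure μ] [μ.InnerRegularCompactLTTop] {A : Set X}
    (hA : MeasurableSet A) {b : ℝ} (hb : 0 < b) :
    ∃ K ⊆ A, IsCompact K ∧ Real.negMulLog (μ.real (A \ K)) < b := by
  obtain ⟨δ, hδ, hδb⟩ := Metric.continuousAt_iff.1
    (Real.continuous_negMulLog.continuousAt (x := 0)) b hb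
  obtain ⟨K, hKA, hK, hKμ⟩ := hA.exists_isCompact_sdiff_lt (measure_ne_top μ _)
    (ENNReal.ofReal_pos.2 hδ).ne'
  refine ⟨K, hKA, hK, ?_⟩
  have h : dist (Real.negMulLog (μ.real (A \ K))) (Real.negMulLog 0) < b := hδb (by
    rw [Real.dist_0_eq_abs, abs_of_nonneg measureReal_nonneg]
    exact (ENNReal.lt_ofReal_iff_toReal_lt (measure_ne_top _ _)).1 hKμ)
  rw [Real.negMulLog_zero, Real.dist_0_eq_abs] at h
  exact (le_abs_self _).trans_lt h

lemma exists_compact_approx [MetricSpace X] [CompactSpace X] [MeasurableSpace X] [BorelSpace X]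
    [MeasurableSpace ι] [MeasurableSingletonClass ι] (μ : Measure X) [IsProbabilityMeasure μ]
    {ξ : X → ι} (hξ : Measurable ξ) :
    ∃ η : X → Set ι, Measurable η ∧ condEntropy μ ξ η ≤ 1 ∧
      ∃ ε > 0, ∀ x, (η '' Metric.closedBall x ε).ncard ≤ 2 := by
  choose K hKξ hK hKμ using fun i => exists_isCompact_negMulLog_sdiff_lt μ
    (hξ (measurableSet_singleton i)) (by positivity : 0 < ((Fintype.card ι : ℝ) + 1)⁻¹)
  obtain ⟨ε, hε, hsep⟩ := exists_pos_forall_dist_le_imp_eq hK fun i j hij =>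
    Disjoint.mono (hKξ i) (hKξ j) (Disjoint.preimage _ (disjoint_singleton.2 hij))
  refine ⟨fun x => {i | x ∈ K i}, measurable_set_iff.2 fun i => (hK i).measurableSet.mem, ?_,
    ε / 2, half_pos hε, ncard_image_setOf_mem_closedBall_le hsep⟩
  calc condEntropy μ ξ _ ≤ _ := condEntropy_setOf_mem_le μ hKξ
    _ ≤ ∑ _i : ι, ((Fintype.card ι : ℝ) + 1)⁻¹ := Finset.sum_le_sum fun i _ => (hKμ i).le
    _ ≤ 1 := by
      rw [Finset.sum_const, Finset.card_univ, nsmul_eq_mul, mul_inv_le_iff₀ (by positivity)]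
      linarith

end CompactApproximation

section TopPressure

variable [MetricSpace X] {f : X → X} {g : X → ℝ} {c : ℝ}

lemma coe_le_topPressure {ε : ℝ} (hε : 0 < ε)
    (h : ∃ᶠ n : ℕ in atTop, n * c ≤ Real.log (sepSum f g n ε)) : (c : EReal) ≤ topPressure f g := by
  refine le_iSup₂_of_le ε hε (le_limsup_of_frequently_le' ?_)
  refine (h.and_eventually (eventually_gt_atTop 0)).mono fun n ⟨hle, hn⟩ => ?_
  rwa [EReal.coe_le_coe_iff, le_inv_mul_iff₀ (by positivity)]

lemma topPressure_le_coe
    (h : ∀ ε > 0, ∀ᶠ n : ℕ in atTop, Real.log (sepSum f g n ε) ≤ n * c) :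
    topPressure f g ≤ (c : EReal) := by
  refine iSup₂_le fun ε hε => limsup_le_of_le (by isBoundedDefault) ?_
  filter_upwards [h ε hε, eventually_gt_atTop 0] with n hle hn
  rwa [EReal.coe_le_coe_iff, inv_mul_le_iff₀ (by positivity)]

end TopPressure

section UpperBound

variable {κ : Type*}

lemma card_piFinset_image_closedBall_le [MetricSpace X] [Finite κ] {η : X → κ} {ε : ℝ} {L : ℕ}
    (hL : ∀ x, (η '' Metric.closedBall x ε).ncard ≤ L) {n : ℕ} (y : Fin n → X) :
    (Fintype.piFinset fun i => (toFinite (η '' Metric.closedBall (y i) ε)).toFinset).card ≤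
      L ^ n := by
  rw [Fintype.card_piFinset]
  refine (Finset.prod_le_pow_card _ _ L fun i _ => ?_).trans_eq (by simp)
  exact (ncard_eq_toFinset_card _).symm.trans_le (hL _)

variable [Fintype κ] [MeasurableSpace κ] [MeasurableSingletonClass κ]

lemma entropy_add_integral_le_of_cover {α : Type*} [MeasurableSpace X] (μ : Measure X)
    [IsProbabilityMeasure μ] {ξ : X → κ} (hξ : Measurable ξ) {G : X → ℝ} (hG : Integrable G μ)
    {F : Finset α} {A : α → Finset κ} {m : ℕ} (hA : ∀ y, (A y).card ≤ m) {a : α → ℝ}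
    (ha : ∀ y, 0 ≤ a y) (hF : ∀ x, ∃ y ∈ F, ξ x ∈ A y ∧ Real.exp (G x) ≤ a y) :
    entropy μ ξ + ∫ x, G x ∂μ ≤ Real.log (m * ∑ y ∈ F, a y) := by
  classical
  let b : κ → ℝ := fun i => ∑ y ∈ F, if i ∈ A y then a y else 0
  have ite_nonneg : ∀ i y, 0 ≤ if i ∈ A y then a y else 0 := fun i y => by
    split_ifs
    exacts [ha y, le_rfl]
  have hb : ∀ i, 0 ≤ b i := fun i => Finset.sum_nonneg fun y _ => ite_nonneg i y
  have hGb : ∀ x, Real.exp (G x) ≤ b (ξ x) := fun x => by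
    obtain ⟨y, hy, hxy, hle⟩ := hF x
    calc Real.exp (G x) ≤ if ξ x ∈ A y then a y else 0 := by rwa [if_pos hxy]
      _ ≤ b (ξ x) := Finset.single_le_sum (fun z _ => ite_nonneg (ξ x) z) hy
  have hsum : ∑ i, b i ≤ m * ∑ y ∈ F, a y := by
    rw [Finset.sum_comm, Finset.mul_sum]
    refine Finset.sum_le_sum fun y _ => ?_
    rw [Finset.sum_ite_mem, Finset.univ_inter, Finset.sum_const, nsmul_eq_mul]
    exact mul_le_mul_of_nonneg_right (by exact_mod_cast hA y) (ha y)
  obtain ⟨x₀⟩ := μ.nonempty_of_neZero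
  have hpos : 0 < ∑ i, b i := Finset.sum_pos' (fun i _ => hb i)
    ⟨ξ x₀, Finset.mem_univ _, (Real.exp_pos _).trans_le (hGb x₀)⟩
  exact (entropy_add_integral_le_log_sum μ hξ hG hb hGb).trans (Real.log_le_log hpos hsum)

lemma IsSpanningSet.entropy_itinerary_add_integral_le [MetricSpace X] [MeasurableSpace X]
    {μ : Measure X} [IsProbabilityMeasure μ] {f : X → X} (hf : MeasurePreserving f μ μ) {g : X → ℝ}
    (hg : Integrable g μ) {η : X → κ} (hη : Measurable η) {ε τ : ℝ} {L n : ℕ} (hL₀ : L ≠ 0)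
    (hL : ∀ x, (η '' Metric.closedBall x ε).ncard ≤ L)
    (hτ : ∀ x y, dist x y ≤ ε → |g x - g y| ≤ τ) {F : Finset X} (hF : IsSpanningSet f n ε univ F) :
    entropy μ (itinerary f η n) + n * ∫ x, g x ∂μ ≤
      n * (Real.log L + τ) + Real.log (∑ x ∈ F, Real.exp (birkhoff f g n x)) := by
  have hint : Integrable (birkhoff f g n) μ := integrable_finsetSum _ fun i _ =>
    (hf.iterate i).integrable_comp_of_integrable hg
  obtain ⟨x₀⟩ := μ.nonempty_of_neZero
  obtain ⟨y₀, hy₀, -⟩ := hF x₀ (mem_univ x₀)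
  have hsum : 0 < ∑ x ∈ F, Real.exp (birkhoff f g n x) :=
    Finset.sum_pos (fun _ _ => Real.exp_pos _) ⟨y₀, hy₀⟩
  calc entropy μ (itinerary f η n) + n * ∫ x, g x ∂μ
      = entropy μ (itinerary f η n) + ∫ x, birkhoff f g n x ∂μ := by rw [integral_birkhoff hf hg]
    _ ≤ Real.log ((L ^ n : ℕ) * ∑ y ∈ F, Real.exp (n * τ) * Real.exp (birkhoff f g n y)) := by
        refine entropy_add_integral_le_of_cover μ (measurable_itinerary hη hf.measurable n) hint
          (fun y => card_piFinset_image_closedBall_le hL fun i => f^[i] y)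
          (fun _ => by positivity) fun x => ?_
        obtain ⟨y, hy, hxy⟩ := hF x (mem_univ x)
        refine ⟨y, hy, Fintype.mem_piFinset.2 fun i => (toFinite _).mem_toFinset.2
          ⟨_, Metric.mem_closedBall'.2 ((dist_iterate_le_dynDist f i.2 y x).trans hxy), rfl⟩, ?_⟩
        rw [← Real.exp_add, Real.exp_le_exp]
        linarith [abs_le.1 (abs_birkhoff_sub_le hτ hxy)]
    _ = n * (Real.log L + τ) + Real.log (∑ x ∈ F, Real.exp (birkhoff f g n x)) := by
        rw [← Finset.mul_sum, Real.log_mul (by positivity) (by positivity),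
          Real.log_mul (by positivity) hsum.ne', Real.log_exp, Nat.cast_pow, Real.log_pow]
        ring

variable [MetricSpace X] [CompactSpace X] [MeasurableSpace X] [BorelSpace X] {μ : Measure X}
  [IsProbabilityMeasure μ] {f : X → X} {g : X → ℝ} {ξ : X → κ}

lemma exists_forall_isSpanningSet_entropy_itinerary_le (hf : MeasurePreserving f μ μ)
    (hg : Continuous g) (hξ : Measurable ξ) :
    ∃ ε > 0, ∀ n F, IsSpanningSet f n ε univ F →
      entropy μ (itinerary f ξ n) + n * ∫ x, g x ∂μ ≤
        n * (Real.log 2 + 2) + Real.log (∑ x ∈ F, Real.exp (birkhoff f g n x)) := by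
  obtain ⟨η, hη, hξη, ε, hε, hcard⟩ := exists_compact_approx μ hξ
  obtain ⟨ε', hε', hτ⟩ := exists_pos_forall_abs_sub_le hg one_pos
  refine ⟨min ε ε', lt_min hε hε', fun n F hF => ?_⟩
  have hη_le := hF.entropy_itinerary_add_integral_le hf
    (hg.integrable_of_hasCompactSupport (.of_compactSpace g)) hη two_ne_zero
    (fun x => (ncard_le_ncard (image_mono (Metric.closedBall_subset_closedBall
      (min_le_left ε ε')))).trans (hcard x))
    fun x y hxy => hτ x y (hxy.trans (min_le_right ε ε'))
  have hcond : condEntropy μ (itinerary f ξ n) (itinerary f η n) ≤ n * 1 :=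
    (condEntropy_itinerary_le μ hf hξ hη n).trans (by gcongr)
  have hmono : entropy μ (itinerary f ξ n) ≤
      entropy μ (fun x => (itinerary f ξ n x, itinerary f η n x)) :=
    entropy_le_of_factorsThrough μ ((measurable_itinerary hξ hf.measurable n).prodMk
      (measurable_itinerary hη hf.measurable n)) fun _ _ h => congrArg Prod.fst h
  rw [condEntropy] at hcond
  push_cast at hη_le
  linarith

/- Replacing `f` by `f^[N]` and `g` by its `N`-th Birkhoff sum multiplies entropies and integrals
by `N`, but leaves the constant `log 2 + 2` unchanged. -/
lemma exists_forall_isSpanningSet_entropy_itinerary_mul_le (hf : MeasurePreserving f μ μ)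
    (hf' : Continuous f) (hg : Continuous g) (hξ : Measurable ξ) {δ : ℝ} (hδ : 0 < δ) :
    ∃ N > 0, ∃ ε > 0, ∀ n F, IsSpanningSet f (n * N) ε univ F →
      entropy μ (itinerary f ξ (n * N)) + (n * N : ℕ) * ∫ x, g x ∂μ ≤
        (n * N : ℕ) * δ + Real.log (∑ x ∈ F, Real.exp (birkhoff f g (n * N) x)) := by
  obtain ⟨N, hN⟩ := exists_nat_gt ((Real.log 2 + 2) / δ)
  have hN₀ : 0 < N := Nat.cast_pos.1 (hN.trans' (by positivity))
  rw [div_lt_iff₀ hδ] at hN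
  obtain ⟨ε, hε, h⟩ := exists_forall_isSpanningSet_entropy_itinerary_le (hf.iterate N)
    (continuous_birkhoff hf' hg N) (measurable_itinerary hξ hf.measurable N)
  refine ⟨N, hN₀, ε, hε, fun n F hF => ?_⟩
  have hle := h n F (hF.iterate hN₀)
  simp only [← birkhoff_mul] at hle
  rw [integral_birkhoff hf (hg.integrable_of_hasCompactSupport (.of_compactSpace g))] at hle
  have hmono : entropy μ (itinerary f ξ (n * N)) ≤
      entropy μ (itinerary f^[N] (itinerary f ξ N) n) :=
    entropy_le_of_factorsThrough μ (measurable_itinerary (measurable_itinerary hξ hf.measurable N)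
      (hf.iterate N).measurable n) (itinerary_mul_factorsThrough f ξ n N)
  have hδN : n * (Real.log 2 + 2) ≤ n * (N * δ) := by gcongr
  push_cast
  linarith

theorem ksEntropy_add_integral_le_topPressure (hf : MeasurePreserving f μ μ) (hf' : Continuous f)
    (hg : Continuous g) : ksEntropy μ f + ((∫ x, g x ∂μ : ℝ) : EReal) ≤ topPressure f g := by
  refine EReal.le_of_forall_lt_iff_le.1 fun c hc => ?_
  obtain ⟨c', hPc', hc'c⟩ := EReal.lt_iff_exists_real_btwn.1 hc
  rw [← EReal.le_sub_iff_add_le (.inl (EReal.coe_ne_bot _)) (.inl (EReal.coe_ne_top _)),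
    ← EReal.coe_sub]
  refine ksEntropy_le_coe fun k ξ hξ => ?_
  obtain ⟨N, hN, ε, hε, h⟩ := exists_forall_isSpanningSet_entropy_itinerary_mul_le hf hf' hg hξ
    (sub_pos.2 (EReal.coe_lt_coe_iff.1 hc'c))
  have hev : ∀ᶠ n : ℕ in atTop, Real.log (sepSum f g n ε) < n * c' := by
    by_contra hfreq
    exact hPc'.not_ge (coe_le_topPressure hε ((not_eventually.1 hfreq).mono fun _ => le_of_not_gt))
  have htend : Tendsto (· * N) atTop atTop :=
    tendsto_atTop_mono (Nat.le_mul_of_pos_right · hN) tendsto_id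
  obtain ⟨n, hlt, hn⟩ := ((htend.eventually hev).and (eventually_gt_atTop 0)).exists
  obtain ⟨E, -, hE, hE'⟩ := exists_isSeparatedSet_isSpanningSet hf' (n * N) hε univ
  have hpos : 0 < ∑ x ∈ E, Real.exp (birkhoff f g (n * N) x) := by
    obtain ⟨x⟩ := μ.nonempty_of_neZero
    obtain ⟨y, hy, -⟩ := hE' x (mem_univ x)
    exact Finset.sum_pos (fun _ _ => Real.exp_pos _) ⟨y, hy⟩
  refine ⟨n * N, Nat.mul_pos hn hN, ?_⟩
  linarith [h n E hE', Real.log_le_log hpos (hE.sum_exp_le_sepSum hf' hg hε)]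

end UpperBound

section NullFrontier

lemma measure_frontier_iInter_eq_zero [TopologicalSpace X] [MeasurableSpace X] {ι : Type*}
    [Finite ι] (μ : Measure X) {A : ι → Set X} (h : ∀ i, μ (frontier (A i)) = 0) :
    μ (frontier (⋂ i, A i)) = 0 := by
  refine measure_mono_null (fun x hx => ?_) (measure_iUnion_null h)
  rw [frontier, interior_iInter_of_finite] at hx
  obtain ⟨i, hi⟩ := not_forall.1 (mt mem_iInter.2 hx.2)
  exact mem_iUnion.2 ⟨i, closure_mono (iInter_subset A i) hx.1, hi⟩

lemma measure_frontier_setOf_mem_preimage_eq_zero [TopologicalSpace X] [MeasurableSpace X]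
    {ι : Type*} [Finite ι] (μ : Measure X) {B : ι → Set X} (hB : ∀ i, μ (frontier (B i)) = 0)
    (s : Set ι) : μ (frontier ((fun x => {i | x ∈ B i}) ⁻¹' {s})) = 0 := by
  classical
  have hfibre : (fun x => {i | x ∈ B i}) ⁻¹' {s} = ⋂ i, if i ∈ s then B i else (B i)ᶜ := by
    ext x
    simp only [mem_preimage, mem_singleton_iff, Set.ext_iff, mem_ofPred_eq, mem_iInter]
    refine forall_congr' fun i => ?_
    split_ifs with hi <;> simp [hi]
  rw [hfibre]
  refine measure_frontier_iInter_eq_zero μ fun i => ?_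
  split_ifs
  exacts [hB i, frontier_compl (B i) ▸ hB i]

lemma exists_measurable_null_frontier [MetricSpace X] [CompactSpace X] [MeasurableSpace X]
    [BorelSpace X] (μ : Measure X) [IsFiniteMeasure μ] {ε : ℝ} (hε : 0 < ε) :
    ∃ (t : Finset X) (ξ : X → Set t), Measurable ξ ∧ (∀ x y, ξ x = ξ y → dist x y ≤ ε) ∧
      ∀ s, μ (frontier (ξ ⁻¹' {s})) = 0 := by
  choose r hr hnull using fun x : X => exists_null_frontier_thickening μ {x} (half_pos hε)
  simp only [Metric.thickening_singleton] at hnull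
  obtain ⟨t, -, ht⟩ := isCompact_univ.elim_nhds_subcover (fun x => Metric.ball x (r x))
    fun x _ => Metric.ball_mem_nhds x (hr x).1
  refine ⟨t, fun x => {c | x ∈ Metric.ball c.1 (r c)},
    measurable_set_iff.2 fun c => (measurableSet_ball (x := c.1)).mem, fun x y hxy => ?_,
    measure_frontier_setOf_mem_preimage_eq_zero μ fun c => hnull c⟩
  obtain ⟨c, hc, hxc⟩ := mem_iUnion₂.1 (ht (mem_univ x))
  have hyc : y ∈ Metric.ball c (r c) := (Set.ext_iff.1 hxy ⟨c, hc⟩).1 hxc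
  linarith [dist_triangle_right x y c, Metric.mem_ball.1 hxc, Metric.mem_ball.1 hyc, (hr c).2]

lemma measure_frontier_itinerary_preimage_eq_zero [TopologicalSpace X] [MeasurableSpace X]
    [BorelSpace X] {μ : Measure X} {f : X → X} (hf : MeasurePreserving f μ μ)
    (hf' : Continuous f) {ι : Type*} {ξ : X → ι} (h : ∀ i, μ (frontier (ξ ⁻¹' {i})) = 0) {q : ℕ}
    (w : Fin q → ι) : μ (frontier (itinerary f ξ q ⁻¹' {w})) = 0 := by
  have hfibre : itinerary f ξ q ⁻¹' {w} = ⋂ i : Fin q, f^[i] ⁻¹' (ξ ⁻¹' {w i}) := by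
    ext x
    simp [itinerary, funext_iff]
  rw [hfibre]
  refine measure_frontier_iInter_eq_zero μ fun i =>
    measure_mono_null ((hf'.iterate i).frontier_preimage_subset _) ?_
  rw [(hf.iterate i).measure_preimage isClosed_frontier.measurableSet.nullMeasurableSet, h]

lemma tendsto_entropy_of_null_frontier [PseudoMetricSpace X] [MeasurableSpace X] [BorelSpace X]
    {α ι : Type*} [Fintype ι] {l : Filter α} {ν : α → ProbabilityMeasure X}
    {μ : ProbabilityMeasure X} (hν : Tendsto ν l (𝓝 μ)) {ξ : X → ι}
    (hξ : ∀ i, (μ : Measure X) (frontier (ξ ⁻¹' {i})) = 0) :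
    Tendsto (fun a => entropy (ν a : Measure X) ξ) l (𝓝 (entropy (μ : Measure X) ξ)) :=
  tendsto_finsetSum _ fun i _ => (Real.continuous_negMulLog.tendsto _).comp
    ((ENNReal.tendsto_toReal (measure_ne_top _ _)).comp
      (ProbabilityMeasure.tendsto_measure_of_null_frontier_of_tendsto' hν (hξ i)))

end NullFrontier

section GibbsMeasure

lemma sum_exp_div_sum_exp {E : Finset X} (hE : E.Nonempty) (G : X → ℝ) :
    ∑ x ∈ E, Real.exp (G x) / ∑ y ∈ E, Real.exp (G y) = 1 := by
  rw [← Finset.sum_div, div_self (Finset.sum_pos (fun _ _ => Real.exp_pos _) hE).ne']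

/-- The Gibbs measure of the potential `G` on the finite set `E`, with weights proportional
to `exp G`. On finite sets it attains equality in Gibbs' inequality. -/
noncomputable def gibbsMeasure [MeasurableSpace X] (E : Finset X) (G : X → ℝ) : Measure X :=
  ∑ x ∈ E, ENNReal.ofReal (Real.exp (G x) / ∑ y ∈ E, Real.exp (G y)) • Measure.dirac x

variable [MeasurableSpace X] {E : Finset X}

lemma isProbabilityMeasure_gibbsMeasure (hE : E.Nonempty) (G : X → ℝ) :
    IsProbabilityMeasure (gibbsMeasure E G) := by
  refine ⟨?_⟩
  simp only [gibbsMeasure, Measure.finsetSum_apply, Measure.smul_apply, measure_univ, smul_eq_mul,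
    mul_one]
  rw [← ENNReal.ofReal_sum_of_nonneg fun _ _ => by positivity, sum_exp_div_sum_exp hE,
    ENNReal.ofReal_one]

lemma gibbsMeasure_real_preimage_singleton {ι : Type*} [MeasurableSpace ι]
    [MeasurableSingletonClass ι] {ζ : X → ι} (hζ : Measurable ζ) (hinj : InjOn ζ E) (G : X → ℝ)
    {x : X} (hx : x ∈ E) : (gibbsMeasure E G).real (ζ ⁻¹' {ζ x}) =
      Real.exp (G x) / ∑ y ∈ E, Real.exp (G y) := by
  rw [gibbsMeasure, measureReal_def, Measure.finsetSum_apply, Finset.sum_eq_single_of_mem x hx]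
  · rw [Measure.smul_apply, Measure.dirac_apply_of_mem (show x ∈ ζ ⁻¹' {ζ x} from rfl),
      smul_eq_mul, mul_one, ENNReal.toReal_ofReal (by positivity)]
  · intro y hy hyx
    simp [Measure.dirac_apply' _ (hζ (measurableSet_singleton (ζ x))), hinj.eq_iff hy hx, hyx]

variable [MeasurableSingletonClass X]

lemma integral_gibbsMeasure (E : Finset X) (G h : X → ℝ) :
    ∫ x, h x ∂gibbsMeasure E G = ∑ x ∈ E, Real.exp (G x) / (∑ y ∈ E, Real.exp (G y)) * h x := by
  rw [gibbsMeasure, integral_finsetSum_measure fun x _ =>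
    (integrable_dirac (by simp)).smul_measure ENNReal.ofReal_ne_top]
  refine Finset.sum_congr rfl fun x _ => ?_
  rw [integral_smul_measure, integral_dirac, ENNReal.toReal_ofReal (by positivity), smul_eq_mul]

lemma log_sum_exp_le_entropy_gibbsMeasure_add_integral {ι : Type*} [Fintype ι] [MeasurableSpace ι]
    [MeasurableSingletonClass ι] {ζ : X → ι} (hE : E.Nonempty) (hζ : Measurable ζ)
    (hinj : InjOn ζ E) (G : X → ℝ) :
    Real.log (∑ x ∈ E, Real.exp (G x)) ≤
      entropy (gibbsMeasure E G) ζ + ∫ x, G x ∂gibbsMeasure E G := by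
  classical
  have := isProbabilityMeasure_gibbsMeasure hE G
  set σ := gibbsMeasure E G
  set Z := ∑ x ∈ E, Real.exp (G x)
  have hZ : 0 < Z := Finset.sum_pos (fun _ _ => Real.exp_pos _) hE
  have hw : ∀ x, Real.negMulLog (Real.exp (G x) / Z) + Real.exp (G x) / Z * G x =
      Real.exp (G x) / Z * Real.log Z := fun x => by
    rw [Real.negMulLog, Real.log_div (Real.exp_pos _).ne' hZ.ne', Real.log_exp]
    ring
  calc Real.log Z = ∑ x ∈ E, (Real.negMulLog (Real.exp (G x) / Z) + Real.exp (G x) / Z * G x) := by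
        simp only [hw]
        rw [← Finset.sum_mul, sum_exp_div_sum_exp hE, one_mul]
    _ = ∑ i ∈ E.image ζ, Real.negMulLog (σ.real (ζ ⁻¹' {i})) + ∫ x, G x ∂σ := by
        rw [Finset.sum_add_distrib, Finset.sum_image hinj, integral_gibbsMeasure]
        congr 1
        exact Finset.sum_congr rfl fun x hx => by
          rw [gibbsMeasure_real_preimage_singleton hζ hinj G hx]
    _ ≤ entropy σ ζ + ∫ x, G x ∂σ := by
        gcongr
        exact Finset.sum_le_sum_of_subset_of_nonneg (Finset.subset_univ _) fun _ _ _ =>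
          Real.negMulLog_nonneg measureReal_nonneg measureReal_le_one

end GibbsMeasure

section AvgMeasure

/-- The average of the first `n` push-forwards of `σ` under `f`. For `n = 0` this is the zero
measure. -/
noncomputable def avgMeasure [MeasurableSpace X] (f : X → X) (σ : Measure X) (n : ℕ) : Measure X :=
  (n : ENNReal)⁻¹ • ∑ i ∈ Finset.range n, σ.map f^[i]

variable [MeasurableSpace X] {f : X → X} (σ : Measure X) [IsProbabilityMeasure σ] {n : ℕ}

lemma isProbabilityMeasure_avgMeasure (hf : Measurable f) (hn : 0 < n) :
    IsProbabilityMeasure (avgMeasure f σ n) := by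
  have hmap : ∀ i, (σ.map f^[i]) univ = 1 := fun i => by
    rw [Measure.map_apply (hf.iterate i) .univ, preimage_univ, measure_univ]
  refine ⟨?_⟩
  simp only [avgMeasure, Measure.smul_apply, Measure.finsetSum_apply, hmap, Finset.sum_const,
    Finset.card_range, nsmul_eq_mul, mul_one, smul_eq_mul]
  exact ENNReal.inv_mul_cancel (Nat.cast_ne_zero.2 hn.ne') (ENNReal.natCast_ne_top n)

lemma avgMeasure_real (hf : Measurable f) (n : ℕ) {A : Set X} (hA : MeasurableSet A) :
    (avgMeasure f σ n).real A = ∑ i ∈ Finset.range n, (n : ℝ)⁻¹ • σ.real (f^[i] ⁻¹' A) := by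
  simp only [avgMeasure, measureReal_def, Measure.smul_apply, Measure.finsetSum_apply, smul_eq_mul,
    Measure.map_apply (hf.iterate _) hA, ENNReal.toReal_mul, ENNReal.toReal_inv,
    ENNReal.toReal_natCast]
  rw [ENNReal.toReal_sum fun i _ => measure_ne_top _ _, Finset.mul_sum]

lemma sum_entropy_comp_iterate_le {ι : Type*} [Fintype ι] [MeasurableSpace ι]
    [MeasurableSingletonClass ι] {η : X → ι} (hf : Measurable f) (hη : Measurable η) (hn : 0 < n) :
    ∑ i ∈ Finset.range n, entropy σ (η ∘ f^[i]) ≤ n * entropy (avgMeasure f σ n) η := by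
  have hn' : (n : ℝ) ≠ 0 := by positivity
  have hconcave : ∀ c, ∑ i ∈ Finset.range n,
      (n : ℝ)⁻¹ • Real.negMulLog (σ.real ((η ∘ f^[i]) ⁻¹' {c})) ≤
        Real.negMulLog ((avgMeasure f σ n).real (η ⁻¹' {c})) := fun c => by
    rw [avgMeasure_real σ hf n (hη (measurableSet_singleton c))]
    exact Real.concaveOn_negMulLog.le_map_sum (fun _ _ => by positivity) (by simp [hn'])
      fun _ _ => measureReal_nonneg
  rw [← inv_mul_le_iff₀ (by positivity), Finset.mul_sum]
  simp only [entropy, Finset.mul_sum]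
  rw [Finset.sum_comm]
  exact Finset.sum_le_sum fun c _ => hconcave c

lemma integral_avgMeasure (hf : Measurable f) (hn : 0 < n) {h : X → ℝ} (hh : Measurable h)
    {C : ℝ} (hC : ∀ x, |h x| ≤ C) :
    n * ∫ x, h x ∂avgMeasure f σ n = ∫ x, birkhoff f h n x ∂σ := by
  have hmap : ∀ i, IsProbabilityMeasure (σ.map f^[i]) := fun i =>
    Measure.isProbabilityMeasure_map (hf.iterate i).aemeasurable
  have hint : ∀ (ρ : Measure X) [IsProbabilityMeasure ρ] {k : X → ℝ}, Measurable k →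
      (∀ x, |k x| ≤ C) → Integrable k ρ := fun ρ _ k hk hkC =>
    .of_bound hk.aestronglyMeasurable C (ae_of_all _ hkC)
  simp only [birkhoff]
  rw [avgMeasure, integral_smul_measure, integral_finsetSum_measure fun i _ => hint _ hh hC,
    integral_finsetSum (f := fun i x => h (f^[i] x)) _
      fun i _ => hint σ (hh.comp (hf.iterate i)) fun x => hC _, ENNReal.toReal_inv,
    ENNReal.toReal_natCast, smul_eq_mul, mul_inv_cancel_left₀ (by positivity)]
  exact Finset.sum_congr rfl fun i _ =>
    integral_map (hf.iterate i).aemeasurable hh.aestronglyMeasurable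

lemma abs_integral_comp_avgMeasure_sub_le (hf : Measurable f) (hn : 0 < n) {h : X → ℝ}
    (hh : Measurable h) {C : ℝ} (hC : ∀ x, |h x| ≤ C) :
    |∫ x, h (f x) ∂avgMeasure f σ n - ∫ x, h x ∂avgMeasure f σ n| ≤ 2 * C / n := by
  have hn' : (0 : ℝ) < n := by exact_mod_cast hn
  have hcomp : Measurable fun x => h (f x) := hh.comp hf
  have htelescope : ∀ x, birkhoff f (fun y => h (f y)) n x - birkhoff f h n x =
      h (f^[n] x) - h x := fun x => by
    simp only [birkhoff, ← Finset.sum_sub_distrib, ← Function.iterate_succ_apply' f]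
    exact Finset.sum_range_sub (fun i => h (f^[i] x)) n
  have hbirkhoff : ∀ {k : X → ℝ}, Measurable k → (∀ x, |k x| ≤ C) →
      Integrable (birkhoff f k n) σ := fun hk hkC =>
    integrable_finsetSum _ fun i _ =>
      .of_bound (hk.comp (hf.iterate i)).aestronglyMeasurable C (ae_of_all _ fun _ => hkC _)
  have hsub : n * (∫ x, h (f x) ∂avgMeasure f σ n - ∫ x, h x ∂avgMeasure f σ n) =
      ∫ x, (h (f^[n] x) - h x) ∂σ := by
    rw [mul_sub, integral_avgMeasure σ hf hn hcomp fun _ => hC _,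
      integral_avgMeasure σ hf hn hh hC,
      ← integral_sub (hbirkhoff hcomp fun _ => hC _) (hbirkhoff hh hC)]
    exact integral_congr_ae (ae_of_all _ htelescope)
  have hbound : |∫ x, (h (f^[n] x) - h x) ∂σ| ≤ 2 * C := by
    simpa using norm_integral_le_of_norm_le_const (μ := σ) (f := fun x => h (f^[n] x) - h x)
      (ae_of_all _ fun x => (norm_sub_le _ _).trans
        (by linarith [hC x, hC (f^[n] x)] : |h (f^[n] x)| + |h x| ≤ 2 * C))
  rwa [le_div_iff₀ hn', ← abs_of_pos hn', ← abs_mul, mul_comm, hsub]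

end AvgMeasure

section Misiurewicz

variable [MetricSpace X] [CompactSpace X] [MeasurableSpace X] [BorelSpace X] {f : X → X}

lemma exists_measurePreserving_tendsto_avgMeasure (hf : Continuous f) {U : Ultrafilter ℕ}
    (hU : (U : Filter ℕ) ≤ atTop) (σ : ℕ → Measure X) [∀ n, IsProbabilityMeasure (σ n)] :
    ∃ (μ : ProbabilityMeasure X) (ν : ℕ → ProbabilityMeasure X),
      MeasurePreserving f (μ : Measure X) μ ∧ Tendsto ν U (𝓝 μ) ∧
      ∀ n, 0 < n → (ν n : Measure X) = avgMeasure f (σ n) n := by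
  have havg : ∀ n, ∃ ρ : ProbabilityMeasure X, 0 < n → (ρ : Measure X) = avgMeasure f (σ n) n :=
    fun n => by
      obtain rfl | hn := n.eq_zero_or_pos
      · exact ⟨⟨σ 0, inferInstance⟩, fun h => absurd h (lt_irrefl 0)⟩
      · exact ⟨⟨_, isProbabilityMeasure_avgMeasure (σ n) hf.measurable hn⟩, fun _ => rfl⟩
  choose ν hν using havg
  obtain ⟨μ, -, hμ⟩ := isCompact_univ.ultrafilter_le_nhds (U.map ν) (by simp)
  have hlim : Tendsto ν U (𝓝 μ) := hμ
  refine ⟨μ, ν, ⟨hf.measurable, ?_⟩, hlim, hν⟩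
  have := Measure.isProbabilityMeasure_map (μ := (μ : Measure X)) hf.measurable.aemeasurable
  refine ext_of_forall_integral_eq_of_IsFiniteMeasure fun h => ?_
  rw [integral_map hf.measurable.aemeasurable h.continuous.aestronglyMeasurable]
  have hint := ProbabilityMeasure.tendsto_iff_forall_integral_tendsto.1 hlim
  have hdiff := (hint (h.compContinuous ⟨f, hf⟩)).sub (hint h)
  have hzero : Tendsto (fun n => ∫ x, h (f x) ∂(ν n : Measure X) - ∫ x, h x ∂(ν n : Measure X)) U
      (𝓝 0) := by
    refine squeeze_zero_norm' ?_
      ((tendsto_natCast_atTop_atTop.mono_left hU).const_div_atTop (2 * ‖h‖))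
    filter_upwards [hU (eventually_gt_atTop 0)] with n hn
    rw [hν n hn]
    exact abs_integral_comp_avgMeasure_sub_le (σ n) hf.measurable hn h.continuous.measurable
      h.norm_coe_le_norm
  exact sub_eq_zero.1 (tendsto_nhds_unique hdiff hzero)

variable {g : X → ℝ} {ε : ℝ} {n : ℕ}

lemma IsSeparatedSet.mul_log_sum_exp_sub_le {ι : Type*} [Fintype ι] [MeasurableSpace ι]
    [MeasurableSingletonClass ι] {ξ : X → ι} (hf : Continuous f) (hg : Continuous g) (hε : 0 ≤ ε)
    (hn : 0 < n) {E : Finset X} (hsep : IsSeparatedSet f n ε E) (hE : E.Nonempty)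
    (hξ : Measurable ξ) (hξε : ∀ x y, ξ x = ξ y → dist x y ≤ ε) (q : ℕ) :
    q * (Real.log (∑ x ∈ E, Real.exp (birkhoff f g n x)) -
        n * ∫ x, g x ∂avgMeasure f (gibbsMeasure E (birkhoff f g n)) n) ≤
      n * entropy (avgMeasure f (gibbsMeasure E (birkhoff f g n)) n) (itinerary f ξ q) +
        q ^ 2 * Real.log (Fintype.card ι) := by
  have := isProbabilityMeasure_gibbsMeasure hE (birkhoff f g n)
  set σ := gibbsMeasure E (birkhoff f g n)
  obtain ⟨C, hC⟩ := (isCompact_univ.image hg.abs).bddAbove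
  have hinj : InjOn (itinerary f ξ n) E := fun x hx y hy hxy => by
    by_contra hne
    exact (hsep x hx y hy hne).not_ge
      (dynDist_le_of_forall hε fun i hi => hξε _ _ (itinerary_eq_iff.1 hxy i hi))
  have hgibbs := log_sum_exp_le_entropy_gibbsMeasure_add_integral hE
    (measurable_itinerary hξ hf.measurable n) hinj (birkhoff f g n)
  have havg := sum_entropy_comp_iterate_le σ hf.measurable
    (measurable_itinerary hξ hf.measurable q) hn
  rw [integral_avgMeasure σ hf.measurable hn hg.measurable
    fun x => hC (mem_image_of_mem _ (mem_univ x))]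
  calc q * (Real.log (∑ x ∈ E, Real.exp (birkhoff f g n x)) - ∫ x, birkhoff f g n x ∂σ)
      ≤ q * entropy σ (itinerary f ξ n) := by gcongr; linarith
    _ ≤ ∑ i ∈ Finset.range n, entropy σ (itinerary f ξ q ∘ f^[i]) +
          q ^ 2 * Real.log (Fintype.card ι) := mul_entropy_itinerary_le σ hf.measurable hξ n q
    _ ≤ _ := by gcongr

lemma mul_sub_integral_le_entropy_of_tendsto {ι : Type*} [Fintype ι] {ζ : X → ι} {l : Filter ℕ}
    [l.NeBot] (hl : l ≤ atTop) {ν : ℕ → ProbabilityMeasure X} {μ : ProbabilityMeasure X}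
    (hν : Tendsto ν l (𝓝 μ)) (hg : Continuous g)
    (hζ : ∀ i, (μ : Measure X) (frontier (ζ ⁻¹' {i})) = 0) {a b c : ℝ}
    (h : ∀ᶠ n : ℕ in l, b * (c - ∫ x, g x ∂(ν n : Measure X)) ≤
      entropy (ν n : Measure X) ζ + a / n) :
    b * (c - ∫ x, g x ∂(μ : Measure X)) ≤ entropy (μ : Measure X) ζ := by
  have hleft : Tendsto (fun n => b * (c - ∫ x, g x ∂(ν n : Measure X))) l
      (𝓝 (b * (c - ∫ x, g x ∂(μ : Measure X)))) :=
    ((ProbabilityMeasure.tendsto_iff_forall_integral_tendsto.1 hν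
      (BoundedContinuousFunction.mkOfCompact ⟨g, hg⟩)).const_sub c).const_mul _
  have hright : Tendsto (fun n : ℕ => entropy (ν n : Measure X) ζ + a / n) l
      (𝓝 (entropy (μ : Measure X) ζ + 0)) :=
    (tendsto_entropy_of_null_frontier hν hζ).add
      ((tendsto_natCast_atTop_atTop.mono_left hl).const_div_atTop _)
  rw [← add_zero (entropy _ _)]
  exact le_of_tendsto_of_tendsto hleft hright h

theorem exists_coe_le_ksEntropy_add_integral [Nonempty X] (hf : Continuous f) (hg : Continuous g)
    (hε : 0 < ε) {c : ℝ} (h : ∃ᶠ n : ℕ in atTop, n * c ≤ Real.log (sepSum f g n ε)) :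
    ∃ μ : Measure X, IsProbabilityMeasure μ ∧ MeasurePreserving f μ μ ∧
      (c : EReal) ≤ ksEntropy μ f + ((∫ x, g x ∂μ : ℝ) : EReal) := by
  choose E hE hsep hlog using fun n =>
    exists_isSeparatedSet_lt_log_sum_exp hf hg hε (sub_one_lt (Real.log (sepSum f g n ε)))
  have := fun n => isProbabilityMeasure_gibbsMeasure (hE n) (birkhoff f g n)
  have := frequently_iff_neBot.1 h
  let U := Ultrafilter.of (atTop ⊓ 𝓟 {n : ℕ | n * c ≤ Real.log (sepSum f g n ε)})
  have hU : (U : Filter ℕ) ≤ atTop := (Ultrafilter.of_le _).trans inf_le_left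
  have hUh : ∀ᶠ n in (U : Filter ℕ), n * c ≤ Real.log (sepSum f g n ε) :=
    (Ultrafilter.of_le _).trans inf_le_right (mem_principal_self _)
  obtain ⟨μ, ν, hμ, hlim, hν⟩ := exists_measurePreserving_tendsto_avgMeasure hf hU
    fun n => gibbsMeasure (E n) (birkhoff f g n)
  obtain ⟨t, ξ, hξ, hξε, hnull⟩ := exists_measurable_null_frontier (μ : Measure X) hε
  refine ⟨μ, inferInstance, hμ, ?_⟩
  suffices hq : ∀ q : ℕ, q * (c - ∫ x, g x ∂(μ : Measure X)) ≤
      entropy (μ : Measure X) (itinerary f ξ q) by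
    have hks := add_le_add_left (coe_le_ksEntropy hf.measurable hξ hq)
      ((∫ x, g x ∂(μ : Measure X) : ℝ) : EReal)
    rwa [← EReal.coe_add, sub_add_cancel] at hks
  intro q
  refine mul_sub_integral_le_entropy_of_tendsto hU hlim hg
    (measure_frontier_itinerary_preimage_eq_zero hμ hf hnull)
    (a := q ^ 2 * Real.log (Fintype.card (Set t)) + q) ?_
  filter_upwards [hU (eventually_gt_atTop 0), hUh] with n hn hnc
  have hkey := (hsep n).mul_log_sum_exp_sub_le hf hg hε.le hn (hE n) hξ hξε q
  rw [← hν n hn] at hkey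
  have hn' : (0 : ℝ) < n := by exact_mod_cast hn
  have hlow : q * (n * c - 1 - n * ∫ x, g x ∂(ν n : Measure X)) ≤
      q * (Real.log (∑ x ∈ E n, Real.exp (birkhoff f g n x)) -
        n * ∫ x, g x ∂(ν n : Measure X)) := by
    gcongr
    linarith [hlog n]
  rw [← mul_le_mul_iff_right₀ hn', mul_add, mul_div_cancel₀ _ hn'.ne']
  linarith

end Misiurewicz

section Slices

variable {f : X → X} {φ ψ : X → ℝ} {m M T : ℝ} {n : ℕ} {x : X}

lemma abs_birkhoff_sub_le_of_mem_Xset (hM : ∀ x, ψ x ≤ M) (hx : x ∈ Xset f ψ T n) :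
    |birkhoff f ψ n x - T| ≤ M := by
  obtain ⟨hle, hlt⟩ := hx
  rw [birkhoff_succ] at hlt
  rw [abs_le]
  constructor <;> linarith [hM (f^[n] x)]

lemma abs_birkhoff_sub_const_mul_sub_le_of_mem_Xset (hM : ∀ x, ψ x ≤ M) (φ : X → ℝ) (c : ℝ)
    (hx : x ∈ Xset f ψ T n) :
    |birkhoff f (fun y => φ y - c * ψ y) n x - (birkhoff f φ n x - c * T)| ≤ |c| * M := by
  rw [birkhoff_sub_const_mul, sub_sub_sub_cancel_left, ← mul_sub, abs_mul, abs_sub_comm]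
  exact mul_le_mul_of_nonneg_left (abs_birkhoff_sub_le_of_mem_Xset hM hx) (abs_nonneg c)

lemma sum_exp_birkhoff_sub_const_mul_le (hM : ∀ x, ψ x ≤ M) (φ : X → ℝ) (c : ℝ)
    {E : Finset X} (hE : ↑E ⊆ Xset f ψ T n) :
    ∑ x ∈ E, Real.exp (birkhoff f (fun y => φ y - c * ψ y) n x) ≤
      Real.exp (|c| * M - c * T) * ∑ x ∈ E, Real.exp (birkhoff f φ n x) := by
  rw [Finset.mul_sum]
  refine Finset.sum_le_sum fun x hx => ?_
  rw [← Real.exp_add, Real.exp_le_exp]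
  linarith [abs_le.1 (abs_birkhoff_sub_const_mul_sub_le_of_mem_Xset hM φ c (hE hx))]

lemma sum_exp_birkhoff_le (hM : ∀ x, ψ x ≤ M) (φ : X → ℝ) (c : ℝ)
    {E : Finset X} (hE : ↑E ⊆ Xset f ψ T n) :
    ∑ x ∈ E, Real.exp (birkhoff f φ n x) ≤ Real.exp (|c| * M + c * T) *
      ∑ x ∈ E, Real.exp (birkhoff f (fun y => φ y - c * ψ y) n x) := by
  rw [Finset.mul_sum]
  refine Finset.sum_le_sum fun x hx => ?_
  rw [← Real.exp_add, Real.exp_le_exp]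
  linarith [abs_le.1 (abs_birkhoff_sub_const_mul_sub_le_of_mem_Xset hM φ c (hE hx))]

lemma mul_le_of_mem_STset (hψm : ∀ x, m ≤ ψ x) (hn : n ∈ STset f ψ T) : n * m ≤ T :=
  let ⟨x, hx, _⟩ := hn
  (le_birkhoff hψm n x).trans hx

lemma lt_mul_of_mem_STset (hM : ∀ x, ψ x ≤ M) (hn : n ∈ STset f ψ T) : T < (n + 1) * M :=
  let ⟨x, _, hx⟩ := hn
  mod_cast hx.trans_le (birkhoff_le hM (n + 1) x)

lemma exists_mem_Xset (hm : 0 < m) (hψm : ∀ x, m ≤ ψ x) (hT : 0 ≤ T) (x : X) :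
    ∃ n, x ∈ Xset f ψ T n := by
  classical
  have hlarge : ∃ n, T < birkhoff f ψ (n + 1) x := by
    obtain ⟨n, hn⟩ := exists_nat_gt (T / m)
    exact ⟨n, ((div_lt_iff₀ hm).1 (hn.trans (lt_add_one _))).trans_le
      (mod_cast le_birkhoff hψm (n + 1) x)⟩
  refine ⟨Nat.find hlarge, ?_, Nat.find_spec hlarge⟩
  cases hk : Nat.find hlarge with
  | zero => simpa [birkhoff] using hT
  | succ n => exact not_lt.1 (Nat.find_min hlarge (hk ▸ n.lt_succ_self))

lemma mem_Xset_ceil (hm : 0 < m) (hψm : ∀ x, m ≤ ψ x) (n : ℕ) (x : X) :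
    x ∈ Xset f ψ (⌈birkhoff f ψ n x / m⌉₊ * m) n := by
  have hnonneg : 0 ≤ birkhoff f ψ n x / m :=
    div_nonneg ((mul_nonneg n.cast_nonneg hm.le).trans (le_birkhoff hψm n x)) hm.le
  refine ⟨(div_le_iff₀ hm).1 (Nat.le_ceil _), ?_⟩
  rw [birkhoff_succ, ← lt_div_iff₀ hm, add_div]
  exact (Nat.ceil_lt_add_one hnonneg).trans_le
    (by gcongr; exact (one_le_div hm).2 (hψm _))

lemma tsum_indicator_STset (hm : 0 < m) (hψm : ∀ x, m ≤ ψ x) (a : ℕ → ℝ) :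
    ∑' n, (STset f ψ T).indicator a n =
      ∑ n ∈ Finset.range (⌊T / m⌋₊ + 1), (STset f ψ T).indicator a n :=
  tsum_eq_sum fun _ hn => indicator_of_notMem (fun h => hn <| Finset.mem_range.2 <|
    Nat.lt_succ_of_le <| Nat.le_floor <| (le_div_iff₀ hm).2 <| mul_le_of_mem_STset hψm h) _

lemma le_tsum_indicator_STset (hm : 0 < m) (hψm : ∀ x, m ≤ ψ x) {a : ℕ → ℝ} (ha : ∀ n, 0 ≤ a n)
    (hn : n ∈ STset f ψ T) : a n ≤ ∑' n, (STset f ψ T).indicator a n := by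
  have hsupp : (STset f ψ T).Finite := (finite_Iic ⌊T / m⌋₊).subset fun k hk =>
    Nat.le_floor ((le_div_iff₀ hm).2 (mul_le_of_mem_STset hψm hk))
  refine (indicator_of_mem hn a).symm.trans_le (Summable.le_tsum ?_ n fun k _ =>
    indicator_nonneg (fun k _ => ha k) k)
  exact summable_of_hasFiniteSupport (hsupp.subset support_indicator_subset)

end Slices

section SpanningQuantity

variable [MetricSpace X] {f : X → X} {φ ψ : X → ℝ} {m T ε : ℝ}

lemma Qspan_le {F : ℕ → Finset X}
    (hF : ∀ n ∈ STset f ψ T, IsSpanningSet f n ε (Xset f ψ T n) (F n)) :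
    Qspan f φ ψ T ε ≤ ∑' n, (STset f ψ T).indicator
      (fun n => ∑ x ∈ F n, Real.exp (birkhoff f φ n x)) n := by
  refine csInf_le ⟨0, ?_⟩ ⟨F, hF, rfl⟩
  rintro _ ⟨F, -, rfl⟩
  exact tsum_nonneg fun n => indicator_nonneg (fun n _ => by positivity) n

variable [CompactSpace X]

lemma le_Qspan (hf : Continuous f) (hε : 0 < ε) (hm : 0 < m) (hψm : ∀ x, m ≤ ψ x) {a : ℝ} {n : ℕ}
    (hn : n ∈ STset f ψ T) (h : ∀ F, IsSpanningSet f n ε (Xset f ψ T n) F →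
      a ≤ ∑ x ∈ F, Real.exp (birkhoff f φ n x)) : a ≤ Qspan f φ ψ T ε := by
  choose F _ _ hF using fun n => exists_isSeparatedSet_isSpanningSet hf n hε (Xset f ψ T n)
  refine le_csInf ⟨_, F, fun n _ => hF n, rfl⟩ ?_
  rintro _ ⟨F, hF, rfl⟩
  exact (h (F n) (hF n hn)).trans (le_tsum_indicator_STset
    (a := fun n => ∑ x ∈ F n, Real.exp (birkhoff f φ n x)) hm hψm (fun _ => by positivity) hn)

lemma Qspan_pos [Nonempty X] (hf : Continuous f) (hφ : Continuous φ) (hε : 0 < ε) (hm : 0 < m)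
    (hψm : ∀ x, m ≤ ψ x) (hT : 0 ≤ T) : 0 < Qspan f φ ψ T ε := by
  obtain ⟨y⟩ := ‹Nonempty X›
  obtain ⟨n, hn⟩ := exists_mem_Xset (f := f) hm hψm hT y
  obtain ⟨z, hz⟩ := (continuous_birkhoff hf hφ n).exists_forall_le' (x₀ := y) (by simp)
  refine (Real.exp_pos (birkhoff f φ n z)).trans_le (le_Qspan hf hε hm hψm ⟨y, hn⟩ fun F hF => ?_)
  obtain ⟨x, hx, -⟩ := hF y hn
  exact (Real.exp_le_exp.2 (hz x)).trans
    (Finset.single_le_sum (f := fun x => Real.exp (birkhoff f φ n x)) (fun _ _ => by positivity) hx)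

lemma IsSeparatedSet.sum_exp_le_Qspan (hf : Continuous f) (hε : 0 < ε) (hm : 0 < m)
    (hψm : ∀ x, m ≤ ψ x) {τ : ℝ} (hφ : ∀ x y, dist x y ≤ ε → |φ x - φ y| ≤ τ) {n : ℕ}
    {E : Finset X} (hE : IsSeparatedSet f n (2 * ε) E) (hEX : ↑E ⊆ Xset f ψ T n)
    (hn : n ∈ STset f ψ T) :
    ∑ x ∈ E, Real.exp (birkhoff f φ n x) ≤ Real.exp (n * τ) * Qspan f φ ψ T ε := by
  rw [← div_le_iff₀' (Real.exp_pos _)]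
  exact le_Qspan hf hε hm hψm hn fun F hF =>
    (div_le_iff₀' (Real.exp_pos _)).2 (hE.sum_exp_le hEX hF hφ)

lemma exists_isSeparatedSet_of_lt_Qspan (hf : Continuous f) (hε : 0 < ε) (hm : 0 < m)
    (hψm : ∀ x, m ≤ ψ x) (hT : 0 ≤ T) {a : ℝ} (ha : 0 ≤ a) (h : a < Qspan f φ ψ T ε) :
    ∃ n ∈ STset f ψ T, ∃ E : Finset X, ↑E ⊆ Xset f ψ T n ∧ IsSeparatedSet f n ε E ∧
      a < (m⁻¹ * T + 1) * ∑ x ∈ E, Real.exp (birkhoff f φ n x) := by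
  choose E hEX hEsep hEspan using fun n =>
    exists_isSeparatedSet_isSpanningSet hf n hε (Xset f ψ T n)
  have hlt := h.trans_le (Qspan_le (φ := φ) fun n _ => hEspan n)
  rw [tsum_indicator_STset hm hψm] at hlt
  have hcard : (⌊T / m⌋₊ : ℝ) + 1 ≤ m⁻¹ * T + 1 := by
    rw [inv_mul_eq_div]
    gcongr
    exact Nat.floor_le (by positivity)
  have hsum : ∑ n ∈ Finset.range (⌊T / m⌋₊ + 1), a / (m⁻¹ * T + 1) ≤ a := by
    rw [Finset.sum_const, Finset.card_range, nsmul_eq_mul, mul_div_left_comm, Nat.cast_succ]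
    exact mul_le_of_le_one_right ha (div_le_one_of_le₀ hcard (by positivity))
  obtain ⟨n, -, hn⟩ := Finset.exists_lt_of_sum_lt (hsum.trans_lt hlt)
  have hnS : n ∈ STset f ψ T := by
    by_contra hnS
    rw [indicator_of_notMem hnS] at hn
    exact hn.not_ge (by positivity)
  rw [indicator_of_mem hnS, div_lt_iff₀' (by positivity)] at hn
  exact ⟨n, hnS, E n, hEX n, hEsep n, hn⟩

end SpanningQuantity

section BowenEquation

lemma eventually_add_log_le (C : ℝ) {a δ : ℝ} (ha : 0 < a) (b : ℝ) (hδ : 0 < δ) :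
    ∀ᶠ t : ℝ in atTop, C + Real.log (a * t + b) ≤ δ * t := by
  have hat : Tendsto (fun t : ℝ => a * t + b) atTop atTop :=
    tendsto_atTop_add_const_right _ _ (tendsto_id.const_mul_atTop ha)
  have hlin : (fun t : ℝ => a * t + b) =O[atTop] id :=
    ((Asymptotics.isBigO_refl id atTop).const_mul_left a).add
      (Asymptotics.isLittleO_const_id_atTop b).isBigO
  have hlog : (fun t => C + Real.log (a * t + b)) =o[atTop] id :=
    (Asymptotics.isLittleO_const_id_atTop C).add
      ((Real.isLittleO_log_id_atTop.comp_tendsto hat).trans_isBigO hlin)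
  filter_upwards [hlog.def hδ, eventually_ge_atTop 0] with t ht ht₀
  rw [id, Real.norm_eq_abs, Real.norm_of_nonneg ht₀] at ht
  exact (le_abs_self _).trans ht

variable [MetricSpace X] {f : X → X} {φ ψ : X → ℝ} {m M c ε : ℝ}

lemma exists_frequently_exp_lt_Qspan [CompactSpace X] [Nonempty X] (hf : Continuous f)
    (hφ : Continuous φ) (hm : 0 < m) (hψm : ∀ x, m ≤ ψ x)
    (h : (c : EReal) < inducedPressure f φ ψ) :
    ∃ ε > 0, ∃ᶠ T : ℝ in atTop, Real.exp (c * T) < Qspan f φ ψ T ε := by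
  obtain ⟨ε, hε, hlt⟩ := by simpa only [inducedPressure, lt_iSup_iff] using h
  refine ⟨ε, hε, ((frequently_lt_of_lt_limsup (by isBoundedDefault) hlt).and_eventually
    (eventually_gt_atTop 0)).mono fun T ⟨hlog, hT⟩ => ?_⟩
  rwa [EReal.coe_lt_coe_iff, lt_inv_mul_iff₀' hT,
    Real.lt_log_iff_exp_lt (Qspan_pos hf hφ hε hm hψm hT.le)] at hlog

lemma eventually_Qspan_lt_exp (h : inducedPressure f φ ψ < c) (hε : 0 < ε) :
    ∀ᶠ T : ℝ in atTop, Qspan f φ ψ T ε < Real.exp (c * T) := by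
  have hlt := (le_iSup₂_of_le ε hε le_rfl).trans_lt h
  filter_upwards [eventually_lt_of_limsup_lt hlt (by isBoundedDefault), eventually_gt_atTop 0]
    with T hlog hT
  rw [EReal.coe_lt_coe_iff, inv_mul_lt_iff₀' hT] at hlog
  exact Real.lt_exp_of_log_lt hlog

variable [CompactSpace X]

lemma exists_sub_mul_le_log_sepSum (hf : Continuous f) (hφ : Continuous φ) (hψ : Continuous ψ)
    (hm : 0 < m) (hψm : ∀ x, m ≤ ψ x) (hM : ∀ x, ψ x ≤ M) (hε : 0 < ε) {c' T : ℝ} (hT : 0 ≤ T)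
    (h : Real.exp (c' * T) < Qspan f φ ψ T ε) :
    ∃ n ∈ STset f ψ T, (c' - c) * T - (|c| * M + Real.log (m⁻¹ * T + 1)) ≤
      Real.log (sepSum f (fun x => φ x - c * ψ x) n ε) := by
  obtain ⟨n, hn, E, hEX, hE, hlt⟩ :=
    exists_isSeparatedSet_of_lt_Qspan hf hε hm hψm hT (Real.exp_pos _).le h
  have : Nonempty X := ⟨hn.choose⟩
  have hK : 0 < m⁻¹ * T + 1 := by positivity
  have hexp : (c' - c) * T - (|c| * M + Real.log (m⁻¹ * T + 1)) =
      c' * T - Real.log (m⁻¹ * T + 1) - (|c| * M + c * T) := by ring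
  refine ⟨n, hn, (Real.le_log_iff_exp_le (sepSum_pos hf (hφ.sub (hψ.const_mul c)) n hε)).2 ?_⟩
  rw [hexp, Real.exp_sub, Real.exp_sub, Real.exp_log hK, div_le_iff₀' (Real.exp_pos _),
    div_le_iff₀' hK]
  calc Real.exp (c' * T) ≤ (m⁻¹ * T + 1) * ∑ x ∈ E, Real.exp (birkhoff f φ n x) := hlt.le
    _ ≤ (m⁻¹ * T + 1) * (Real.exp (|c| * M + c * T) *
          ∑ x ∈ E, Real.exp (birkhoff f (fun x => φ x - c * ψ x) n x)) := by
        gcongr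
        exact sum_exp_birkhoff_le hM φ c hEX
    _ ≤ _ := by
        gcongr
        exact hE.sum_exp_le_sepSum hf (hφ.sub (hψ.const_mul c)) hε

theorem topPressure_pos_of_lt_inducedPressure [Nonempty X] (hf : Continuous f) (hφ : Continuous φ)
    (hψ : Continuous ψ) (hm : 0 < m) (hψm : ∀ x, m ≤ ψ x) (hM : ∀ x, ψ x ≤ M)
    (h : (c : EReal) < inducedPressure f φ ψ) : 0 < topPressure f (fun x => φ x - c * ψ x) := by
  obtain ⟨c', hcc', hc'⟩ := EReal.lt_iff_exists_real_btwn.1 h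
  have hδ : 0 < c' - c := sub_pos.2 (EReal.coe_lt_coe_iff.1 hcc')
  obtain ⟨ε, hε, hfreq⟩ := exists_frequently_exp_lt_Qspan hf hφ hm hψm hc'
  have hpos : (0 : EReal) < (((c' - c) / 2 * m : ℝ) : EReal) := mod_cast by positivity
  refine hpos.trans_le (coe_le_topPressure hε (frequently_atTop.2 fun N => ?_))
  obtain ⟨T, hQ, hlog, hT₀, hTN⟩ := (hfreq.and_eventually
    ((eventually_add_log_le (|c| * M) (inv_pos.2 hm) 1 (half_pos hδ)).and
      ((eventually_ge_atTop 0).and (eventually_ge_atTop ((N + 1) * M))))).exists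
  obtain ⟨n, hn, hle⟩ := exists_sub_mul_le_log_sepSum hf hφ hψ hm hψm hM (c := c) hε hT₀ hQ
  have hM₀ : 0 < M := by
    obtain ⟨x⟩ := ‹Nonempty X›
    exact hm.trans_le ((hψm x).trans (hM x))
  have hNn : (N : ℝ) + 1 < n + 1 :=
    lt_of_mul_lt_mul_right (hTN.trans_lt (lt_mul_of_mem_STset hM hn)) hM₀.le
  refine ⟨n, by exact_mod_cast (add_lt_add_iff_right 1).1 hNn |>.le, ?_⟩
  calc n * ((c' - c) / 2 * m) = (c' - c) / 2 * (n * m) := by ring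
    _ ≤ (c' - c) / 2 * T := by gcongr; exact mul_le_of_mem_STset hψm hn
    _ ≤ _ := by linarith

lemma IsSeparatedSet.sum_exp_le_of_subset_Xset (hf : Continuous f) (hm : 0 < m)
    (hψm : ∀ x, m ≤ ψ x) (hM : ∀ x, ψ x ≤ M) {δ τ T : ℝ} (hδ : 0 ≤ δ) (hε : 0 < ε)
    (hφ : ∀ x y, dist x y ≤ ε → |φ x - φ y| ≤ τ) {n : ℕ} {E : Finset X}
    (hE : IsSeparatedSet f n (2 * ε) E) (hEX : ↑E ⊆ Xset f ψ T n)
    (hQ : n * m ≤ T → Qspan f φ ψ T ε ≤ Real.exp ((c + δ) * T)) :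
    ∑ x ∈ E, Real.exp (birkhoff f (fun x => φ x - c * ψ x) n x) ≤
      Real.exp (|c| * M + δ * ((n + 1) * M) + n * τ) := by
  obtain rfl | ⟨x₀, hx₀⟩ := E.eq_empty_or_nonempty
  · exact Finset.sum_empty.trans_le (Real.exp_pos _).le
  have hn : n ∈ STset f ψ T := ⟨x₀, hEX hx₀⟩
  calc ∑ x ∈ E, Real.exp (birkhoff f (fun x => φ x - c * ψ x) n x)
      ≤ Real.exp (|c| * M - c * T) * ∑ x ∈ E, Real.exp (birkhoff f φ n x) :=
        sum_exp_birkhoff_sub_const_mul_le hM φ c hEX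
    _ ≤ Real.exp (|c| * M - c * T) * (Real.exp (n * τ) * Real.exp ((c + δ) * T)) := by
        gcongr
        refine (hE.sum_exp_le_Qspan hf hε hm hψm hφ hEX hn).trans ?_
        gcongr
        exact hQ (mul_le_of_mem_STset hψm hn)
    _ = Real.exp (|c| * M + δ * T + n * τ) := by
        rw [← Real.exp_add, ← Real.exp_add]
        ring_nf
    _ ≤ _ := by
        gcongr
        exact (lt_mul_of_mem_STset hM hn).le

lemma IsSeparatedSet.sum_exp_le_of_Qspan_le_exp (hf : Continuous f) (hm : 0 < m)
    (hψm : ∀ x, m ≤ ψ x) (hM : ∀ x, ψ x ≤ M) {δ τ : ℝ} (hδ : 0 ≤ δ) (hε : 0 < ε)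
    (hφ : ∀ x y, dist x y ≤ ε → |φ x - φ y| ≤ τ) {n : ℕ} {E : Finset X}
    (hE : IsSeparatedSet f n (2 * ε) E)
    (hQ : ∀ T, n * m ≤ T → Qspan f φ ψ T ε ≤ Real.exp ((c + δ) * T)) :
    ∑ x ∈ E, Real.exp (birkhoff f (fun x => φ x - c * ψ x) n x) ≤
      (⌈n * M / m⌉₊ + 1) * Real.exp (|c| * M + δ * ((n + 1) * M) + n * τ) := by
  classical
  let k : X → ℕ := fun x => ⌈birkhoff f ψ n x / m⌉₊
  have hk : ∀ x ∈ E, k x ∈ Finset.range (⌈n * M / m⌉₊ + 1) := fun x _ => by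
    refine Finset.mem_range.2 (Nat.lt_succ_of_le (Nat.ceil_mono ?_))
    gcongr
    exact birkhoff_le hM n x
  have hfibre : ∀ j, ∑ x ∈ E with k x = j, Real.exp (birkhoff f (fun x => φ x - c * ψ x) n x) ≤
      Real.exp (|c| * M + δ * ((n + 1) * M) + n * τ) := fun j => by
    refine IsSeparatedSet.sum_exp_le_of_subset_Xset (T := j * m) hf hm hψm hM hδ hε hφ
      (fun x hx y hy => hE x (Finset.filter_subset _ _ hx) y (Finset.filter_subset _ _ hy))
      (fun x hx => ?_) (hQ _)
    rw [← (Finset.mem_filter.1 hx).2]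
    exact mem_Xset_ceil hm hψm n x
  rw [← Finset.sum_fiberwise_of_maps_to hk]
  refine (Finset.sum_le_card_nsmul _ _ _ fun j _ => hfibre j).trans_eq ?_
  rw [Finset.card_range, nsmul_eq_mul, Nat.cast_succ]

lemma log_sepSum_le_of_Qspan_le_exp [Nonempty X] (hf : Continuous f) (hφ : Continuous φ)
    (hψ : Continuous ψ) (hm : 0 < m) (hψm : ∀ x, m ≤ ψ x) (hM : ∀ x, ψ x ≤ M) {δ τ ε' : ℝ}
    (hδ : 0 ≤ δ) (hε : 0 < ε) (hτ : ∀ x y, dist x y ≤ ε → |φ x - φ y| ≤ τ) {n : ℕ}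
    (hQ : ∀ T, n * m ≤ T → Qspan f φ ψ T ε ≤ Real.exp ((c + δ) * T)) (hε' : 2 * ε ≤ ε') :
    Real.log (sepSum f (fun x => φ x - c * ψ x) n ε') ≤
      |c| * M + δ * ((n + 1) * M) + n * τ + Real.log (M / m * n + 2) := by
  have hM₀ : 0 < M := by
    obtain ⟨x⟩ := ‹Nonempty X›
    exact hm.trans_le ((hψm x).trans (hM x))
  have hceil : (⌈n * M / m⌉₊ + 1 : ℝ) ≤ M / m * n + 2 := by
    rw [mul_comm, ← div_mul_eq_mul_div]
    linarith [Nat.ceil_lt_add_one (show 0 ≤ M / m * n by positivity)]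
  have hsum : sepSum f (fun x => φ x - c * ψ x) n ε' ≤ (M / m * n + 2) *
      Real.exp (|c| * M + δ * ((n + 1) * M) + n * τ) := by
    refine sepSum_le fun E hE => ?_
    have hE' : IsSeparatedSet f n (2 * ε) E := fun x hx y hy hxy =>
      hε'.trans_lt (hE x hx y hy hxy)
    refine (hE'.sum_exp_le_of_Qspan_le_exp hf hm hψm hM hδ hε hτ hQ).trans ?_
    gcongr
  refine (Real.log_le_log
    (sepSum_pos hf (hφ.sub (hψ.const_mul c)) n (by linarith)) hsum).trans_eq ?_
  rw [Real.log_mul (by positivity) (Real.exp_ne_zero _), Real.log_exp, add_comm]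

theorem topPressure_nonpos_of_inducedPressure_le [Nonempty X] (hf : Continuous f)
    (hφ : Continuous φ) (hψ : Continuous ψ) (hm : 0 < m) (hψm : ∀ x, m ≤ ψ x) (hM : ∀ x, ψ x ≤ M)
    (h : inducedPressure f φ ψ ≤ c) : topPressure f (fun x => φ x - c * ψ x) ≤ 0 := by
  have hM₀ : 0 < M := by
    obtain ⟨x⟩ := ‹Nonempty X›
    exact hm.trans_le ((hψm x).trans (hM x))
  refine EReal.le_of_forall_lt_iff_le.1 fun δ hδ => topPressure_le_coe fun ε hε => ?_
  replace hδ : 0 < δ := by exact_mod_cast hδ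
  obtain ⟨ε₁, hε₁, hmod⟩ := exists_pos_forall_abs_sub_le hφ (div_pos hδ three_pos)
  have hη : 0 < min (ε / 2) ε₁ := lt_min (half_pos hε) hε₁
  have hδM : 0 < δ / (3 * M) := by positivity
  have hlt : inducedPressure f φ ψ < ((c + δ / (3 * M) : ℝ) : EReal) :=
    h.trans_lt (EReal.coe_lt_coe_iff.2 (lt_add_of_pos_right c hδM))
  obtain ⟨T₀, hT₀⟩ := eventually_atTop.1 (eventually_Qspan_lt_exp hlt hη)
  have hlog := tendsto_natCast_atTop_atTop.eventually (eventually_add_log_le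
    (|c| * M + δ / 3) (div_pos hM₀ hm) 2 (div_pos hδ three_pos))
  have hlarge := (tendsto_natCast_atTop_atTop.atTop_mul_const hm).eventually_ge_atTop T₀
  filter_upwards [hlog, hlarge] with n hlog hn
  refine (log_sepSum_le_of_Qspan_le_exp (c := c) hf hφ hψ hm hψm hM hδM.le hη
    (fun x y hxy => hmod x y (hxy.trans (min_le_right _ _)))
    (fun T hT => (hT₀ T (hn.trans hT)).le) (by linarith [min_le_left (ε / 2) ε₁])).trans ?_
  have hδ₃ : δ / (3 * M) * ((n + 1) * M) = n * (δ / 3) + δ / 3 := by field_simp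
  linarith

theorem lt_inducedPressure_iff [Nonempty X] (hf : Continuous f) (hφ : Continuous φ)
    (hψ : Continuous ψ) (hpos : ∀ x, 0 < ψ x) :
    (c : EReal) < inducedPressure f φ ψ ↔ 0 < topPressure f (fun x => φ x - c * ψ x) := by
  obtain ⟨a, ha⟩ := hψ.exists_forall_le' (x₀ := Classical.arbitrary X) (by simp)
  obtain ⟨b, hb⟩ := hψ.exists_forall_ge' (x₀ := Classical.arbitrary X) (by simp)
  refine ⟨topPressure_pos_of_lt_inducedPressure hf hφ hψ (hpos a) ha hb, fun h => ?_⟩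
  contrapose! h
  exact topPressure_nonpos_of_inducedPressure_le hf hφ hψ (hpos a) ha hb h

end BowenEquation

section VariationalPrinciple

lemma coe_lt_add_mul_inv_iff {a b c : ℝ} (hb : 0 < b) (h : EReal) :
    (c : EReal) < (h + a) * ((b⁻¹ : ℝ) : EReal) ↔ 0 < h + ((a - c * b : ℝ) : EReal) := by
  induction h with
  | bot => simp [EReal.bot_mul_coe_of_pos (inv_pos.2 hb)]
  | coe h =>
    norm_cast
    rw [← div_eq_mul_inv, lt_div_iff₀ hb, ← add_sub_assoc, sub_pos]
  | top => simp [EReal.top_mul_coe_of_pos (inv_pos.2 hb), -EReal.coe_sub, -EReal.coe_mul]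

variable [MeasurableSpace X] {μ : Measure X} {φ ψ : X → ℝ}

lemma integral_pos_of_forall_pos [NeZero μ] (hψ : Integrable ψ μ) (hpos : ∀ x, 0 < ψ x) :
    0 < ∫ x, ψ x ∂μ := by
  have hsupp : Function.support ψ = univ :=
    eq_univ_of_forall fun x => Function.mem_support.2 (hpos x).ne'
  rw [integral_pos_iff_support_of_nonneg (fun x => (hpos x).le) hψ, hsupp]
  exact Measure.measure_univ_pos.2 (NeZero.ne μ)

lemma coe_lt_add_integral_mul_inv_integral_iff [NeZero μ] (hφ : Integrable φ μ)
    (hψ : Integrable ψ μ) (hpos : ∀ x, 0 < ψ x) (c : ℝ) (h : EReal) :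
    (c : EReal) < (h + ((∫ x, φ x ∂μ : ℝ) : EReal)) * (((∫ x, ψ x ∂μ)⁻¹ : ℝ) : EReal) ↔
      0 < h + ((∫ x, φ x - c * ψ x ∂μ : ℝ) : EReal) := by
  rw [coe_lt_add_mul_inv_iff (integral_pos_of_forall_pos hψ hpos),
    integral_sub hφ (hψ.const_mul c), integral_const_mul]

variable [MetricSpace X] [CompactSpace X] [BorelSpace X] {f : X → X} {g : X → ℝ}

theorem topPressure_eq_iSup [Nonempty X] (hf : Continuous f) (hg : Continuous g) :
    topPressure f g = ⨆ (μ : Measure X) (_ : IsProbabilityMeasure μ) (_ : MeasurePreserving f μ μ),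
      (ksEntropy μ f + ((∫ x, g x ∂μ : ℝ) : EReal)) := by
  refine le_antisymm (EReal.ge_of_forall_gt_iff_ge.1 fun c hc => ?_)
    (iSup₂_le fun μ _ => iSup_le fun hμ => ksEntropy_add_integral_le_topPressure hμ hf hg)
  have hfreq : ∃ ε > 0, ∃ᶠ n : ℕ in atTop, n * c ≤ Real.log (sepSum f g n ε) := by
    contrapose! hc
    exact topPressure_le_coe fun ε hε => (hc ε hε).mono fun n hn => hn.le
  obtain ⟨ε, hε, h⟩ := hfreq
  obtain ⟨μ, hμ, hfμ, hle⟩ := exists_coe_le_ksEntropy_add_integral hf hg hε h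
  exact le_iSup₂_of_le μ hμ (le_iSup_of_le hfμ hle)

end VariationalPrinciple

/-- variational principle for the induced pressure:
`P_ψ(φ) = sup_ν (h_ν(f) + ∫φ dν) / ∫ψ dν` over invariant probability measures. -/
theorem stmt11 [MetricSpace X] [CompactSpace X] [Nonempty X]
    [MeasurableSpace X] [BorelSpace X]
    (f : X → X) (φ ψ : X → ℝ) (hf : Continuous f) (hφ : Continuous φ) (hψ : Continuous ψ)
    (hpos : ∀ x, 0 < ψ x) :
    inducedPressure f φ ψ =
      ⨆ (μ : Measure X) (_ : IsProbabilityMeasure μ) (_ : MeasurePreserving f μ μ),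
        (ksEntropy μ f + ((∫ x, φ x ∂μ : ℝ) : EReal)) *
          (((∫ x, ψ x ∂μ)⁻¹ : ℝ) : EReal) := by
  have hint : ∀ {g : X → ℝ} (μ : Measure X) [IsProbabilityMeasure μ], Continuous g →
      Integrable g μ := fun _ _ hg => hg.integrable_of_hasCompactSupport (.of_compactSpace _)
  have hlt : ∀ c : ℝ, (c : EReal) < inducedPressure f φ ψ ↔ (c : EReal) <
      ⨆ (μ : Measure X) (_ : IsProbabilityMeasure μ) (_ : MeasurePreserving f μ μ),
        (ksEntropy μ f + ((∫ x, φ x ∂μ : ℝ) : EReal)) *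
          (((∫ x, ψ x ∂μ)⁻¹ : ℝ) : EReal) := fun c => by
    have hg : Continuous fun x => φ x - c * ψ x := hφ.sub (hψ.const_mul c)
    simp only [lt_inducedPressure_iff hf hφ hψ hpos, topPressure_eq_iSup hf hg, lt_iSup_iff]
    exact exists_congr fun μ => exists_congr fun _ => exists_congr fun _ =>
      (coe_lt_add_integral_mul_inv_integral_iff (hint μ hφ) (hint μ hψ) hpos c _).symm
  exact le_antisymm (EReal.ge_of_forall_gt_iff_ge.1 fun c hc => ((hlt c).1 hc).le)
    (EReal.ge_of_forall_gt_iff_ge.1 fun c hc => ((hlt c).2 hc).le)
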